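/- Irreducibility of the tensor product for type B: let (ε₁,…,ε_n) = (1^κ,0^{n−κ}) with 1 ≤ κ ≤ n−1. Over the field ℂ(q^{1/2})(x,y) with x, y independent indeterminates, the only subspaces of 𝒲⊗𝒲 invariant under all the operators Δ(e_i), Δ(f_i), Δ(k_i^{±1}) (0 ≤ i ≤ n) are {0} and 𝒲⊗𝒲. -/

import Mathlib

/-!
Irreducibility of `𝒲 ⊗ 𝒲` in type B. Positions are numbered from `0`, and the basis vector
`|a⟩ ⊗ |b⟩` has weight `c = a + b`; the `r`-th unit vector is written `δ_r` (`dlt r`), with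
`δ_n = 0`.

Call `∑ (n - t) c_t` the height of a weight `c`. The generators `e_1, …, e_n` lower it by one, the
generators `f_1, …, f_n` raise it by one, and `e_0` and `f_0` add and remove a particle at position
`0`. The vacuum `|0⟩ ⊗ |0⟩` spans the part of height `0`. Only `e_0` and `f_0` involve `x` and `y`;
every other matrix coefficient is a constant from `ℂ`, nonzero whenever the source and target
vectors are in range, because `q` is not a root of unity.

Let `U` be a nonzero invariant subspace. The joint eigenvalues of the `k_r` separate weights
(`weight_separation`), so `U` contains a weight vector (`exists_weight_vector`). Take a nonzero one
`v` of minimal height, suppose that its weight `c` is not `0`, and let `j` be the first occupied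
position of `c`. By minimality `e_r v = 0` for `r ≥ 1`, and `f_0 f_1 ⋯ f_j v = 0`, since moving a
particle from `j` to `0` and then removing it lowers the height. The first set of equations gives
two-term relations with constant coefficients, which determine all coefficients of `v` from the one
at `(c, 0)`; in particular the coefficient at `(c - δ_j, δ_j)` is a constant multiple of it. The
second equation, read at `(c - δ_j, 0)`, is a relation between these two coefficients with factors
`x⁻¹` and `y⁻¹`. As `x` and `y` are independent over `ℂ` (`xy_indep`), the coefficient at `(c, 0)`
is `0`, hence `v = 0`, a contradiction. So the vacuum is in `U` (`vacuum_mem_of_weight`).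

That the vacuum generates everything (`kk_mem_of_vacuum_mem`) is the same argument for functionals:
a functional vanishing on `U`, hence on all vectors of smaller height, satisfies the same kind of
relations with the roles of the `e_r` and the `f_r` exchanged. Both cases are therefore reduced to
one statement about families of scalars indexed by pairs `(a, b)`, the vanishing criterion `core`.
-/

open scoped BigOperators

set_option synthInstance.maxHeartbeats 1000000
set_option maxHeartbeats 1000000

noncomputable section

namespace TetraGQ

/-! ## Scalar ingredients -/

/-- `(a;qb)_m = ∏_{k=0}^{m-1} (1 - a qb^k)`. -/
def poch (qb a : ℂ) (m : ℕ) : ℂ := ∏ k ∈ Finset.range m, (1 - a * qb ^ k)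

/-- The `q`-binomial `binom(m,k)_qb`, zero unless `k ≤ m`. -/
def qbinom (qb : ℂ) (m k : ℕ) : ℂ :=
  if k ≤ m then poch qb qb m / (poch qb qb k * poch qb qb (m - k)) else 0

/-- `[m] = (q^m - q^{-m})/(q - q^{-1})`. -/
def qnum (q : ℂ) (m : ℕ) : ℂ := (q ^ m - q⁻¹ ^ m) / (q - q⁻¹)

/-- `[m]! = ∏_{k=1}^m [k]`. -/
def qfac (q : ℂ) (m : ℕ) : ℂ := ∏ k ∈ Finset.range m, qnum q (k + 1)

/-- The symmetric `q`-binomial `[m choose k]`, zero unless `k ≤ m`. -/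
def qbin (q : ℂ) (m k : ℕ) : ℂ :=
  if k ≤ m then qfac q m / (qfac q k * qfac q (m - k)) else 0

/-- The 3D `R` matrix entry `R^{a,b,c}_{i,j,k}`. -/
def R3 (q : ℂ) (a b c i j k : ℕ) : ℂ :=
  (if a + b = i + j ∧ b + c = j + k then (1 : ℂ) else 0) *
    ∑ lam ∈ Finset.range (b + 1),
      (-1 : ℂ) ^ lam *
        q ^ ((i : ℤ) * ((c : ℤ) - (j : ℤ)) + ((k : ℤ) + 1) * (lam : ℤ) +
            ((b : ℤ) - (lam : ℤ)) * ((b : ℤ) - (lam : ℤ) - (k : ℤ))) *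
        (poch (q ^ 2) (q ^ 2) (c + (b - lam)) / poch (q ^ 2) (q ^ 2) c) *
        qbinom (q ^ 2) i (b - lam) * qbinom (q ^ 2) j lam

/-- The 3D `L` matrix entry `L^{a,b,c}_{i,j,k}`. -/
def L3 (q : ℂ) (a b c i j k : ℕ) : ℂ :=
  if a = 0 ∧ b = 0 ∧ i = 0 ∧ j = 0 ∧ c = k then 1
  else if a = 1 ∧ b = 1 ∧ i = 1 ∧ j = 1 ∧ c = k then 1
  else if a = 0 ∧ b = 1 ∧ i = 0 ∧ j = 1 ∧ c = k then -q ^ (k + 1)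
  else if a = 1 ∧ b = 0 ∧ i = 1 ∧ j = 0 ∧ c = k then q ^ k
  else if a = 0 ∧ b = 1 ∧ i = 1 ∧ j = 0 ∧ c + 1 = k then 1 - q ^ (2 * k)
  else if a = 1 ∧ b = 0 ∧ i = 0 ∧ j = 1 ∧ c = k + 1 then 1
  else 0

/-- `S^(0) = R`, `S^(1) = L`. -/
def Sg (q : ℂ) (e : Bool) (a b c i j k : ℕ) : ℂ :=
  if e then L3 q a b c i j k else R3 q a b c i j k

/-- Coefficient of `z^{c0}` in the trace solution matrix element
`S₀(z)^{a,b}_{i,j}`. -/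
def trCoef (q : ℂ) {n : ℕ} [NeZero n] (ε : Fin n → Bool) (a b i j : Fin n → ℕ)
    (c0 : ℕ) : ℂ :=
  ∑ᶠ c : Fin n → ℕ,
    if c 0 = c0 then
      ∏ t : Fin n, Sg q (ε t) (a t) (b t) (c t) (i t) (j t) (c (t + 1))
    else 0

/-- Coefficient of `z^{c0}` in the boundary solution matrix element
`S₀^{1,1}(z)^{a,b}_{i,j}`. -/
def bdCoef (q : ℂ) {n : ℕ} (ε : Fin n → Bool) (a b i j : Fin n → ℕ) (c0 : ℕ) : ℂ :=
  ∑ᶠ c : Fin (n + 1) → ℕ,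
    if c 0 = c0 then
      poch (q ^ 2) (q ^ 2) c0 / (poch q q c0 * poch q q (c (Fin.last n))) *
        ∏ t : Fin n, Sg q (ε t) (a t) (b t) (c t.castSucc) (i t) (j t) (c t.succ)
    else 0

/-- Coefficient of `z^{c0}` in the boundary solution matrix element
`S₀^{s,t}(z)^{a,b}_{i,j}`. -/
def bdCoefST (q : ℂ) (s t : ℕ) {n : ℕ} (ε : Fin n → Bool) (a b i j : Fin n → ℕ)
    (c0 : ℕ) : ℂ :=
  ∑ᶠ c : Fin (n + 1) → ℕ,
    if c 0 = c0 then
      poch (q ^ 2) (q ^ 2) (s * c0) /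
          (poch (q ^ s ^ 2) (q ^ s ^ 2) c0 * poch (q ^ t ^ 2) (q ^ t ^ 2) (c (Fin.last n))) *
        ∏ u : Fin n,
          Sg q (ε u) (a u) (b u)
            (if u.castSucc = 0 then s * c0 else c u.castSucc) (i u) (j u)
            (if u.succ = Fin.last n then t * c (Fin.last n) else c u.succ)
    else 0

/-! ## The spaces `𝒲` and `𝒲⊗𝒲` -/

/-- `m` is an admissible occupation vector: at positions with `ε = 1` the entry is `≤ 1`. -/
def Ok {n : ℕ} (ε : Fin n → Bool) (m : Fin n → ℕ) : Prop := ∀ t, ε t = true → m t ≤ 1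

instance {n : ℕ} (ε : Fin n → Bool) : DecidablePred (Ok ε) := fun m =>
  decidable_of_iff (∀ t, ε t = true → m t ≤ 1) Iff.rfl

/-- Basis labels of `𝒲`. -/
def Idx {n : ℕ} (ε : Fin n → Bool) : Type := {m : Fin n → ℕ // Ok ε m}

/-- The space `𝒲` with basis `|m⟩`, over the field `L`. -/
abbrev W (L : Type) [Field L] {n : ℕ} (ε : Fin n → Bool) : Type := Idx ε →₀ L

/-- The space `𝒲 ⊗ 𝒲` with basis `|a⟩⊗|b⟩`, over the field `L`. -/
abbrev WW (L : Type) [Field L] {n : ℕ} (ε : Fin n → Bool) : Type := (Idx ε × Idx ε) →₀ L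

/-- The ket `|m⟩ ∈ 𝒲`; it is `0` if any coordinate is out of range. -/
def ket (L : Type) [Field L] {n : ℕ} (ε : Fin n → Bool) (m : Fin n → ℤ) : W L ε :=
  if h : (∀ t, 0 ≤ m t) ∧ Ok ε (fun t => (m t).toNat) then
    Finsupp.single ⟨fun t => (m t).toNat, h.2⟩ 1
  else 0

/-- The ket `|a⟩⊗|b⟩ ∈ 𝒲⊗𝒲`; it is `0` if any coordinate is out of range. -/
def kk (L : Type) [Field L] {n : ℕ} (ε : Fin n → Bool) (a b : Fin n → ℤ) : WW L ε :=
  if h : ((∀ t, 0 ≤ a t) ∧ Ok ε (fun t => (a t).toNat)) ∧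
      ((∀ t, 0 ≤ b t) ∧ Ok ε (fun t => (b t).toNat)) then
    Finsupp.single (⟨fun t => (a t).toNat, h.1.2⟩, ⟨fun t => (b t).toNat, h.2.2⟩) 1
  else 0

/-- The linear endomorphism of a free module determined by images of basis vectors. -/
def mkEnd (L : Type) [Field L] {α : Type} (v : α → (α →₀ L)) :
    (α →₀ L) →ₗ[L] (α →₀ L) :=
  Finsupp.lsum L fun m => LinearMap.toSpanSingleton L (α →₀ L) (v m)

/-- Product of vectors of `𝒲`, landing in `𝒲⊗𝒲`. -/
def tens (L : Type) [Field L] {n : ℕ} {ε : Fin n → Bool} (u v : W L ε) : WW L ε :=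
  u.sum fun a ca => v.sum fun b cb => Finsupp.single (a, b) (ca * cb)

/-- The operator `A ⊗ B` on `𝒲⊗𝒲`. -/
def opT (L : Type) [Field L] {n : ℕ} {ε : Fin n → Bool}
    (A B : W L ε →ₗ[L] W L ε) : WW L ε →ₗ[L] WW L ε :=
  mkEnd L fun mm => tens L (A (Finsupp.single mm.1 1)) (B (Finsupp.single mm.2 1))

/-- The subspace `𝒲_l ⊗ 𝒲_m` of `𝒲⊗𝒲`. -/
def WWlm (L : Type) [Field L] {n : ℕ} (ε : Fin n → Bool) (l m : ℕ) :
    Submodule L (WW L ε) :=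
  Submodule.span L {v | ∃ p : Idx ε × Idx ε,
    (∑ t, p.1.1 t) = l ∧ (∑ t, p.2.1 t) = m ∧ v = Finsupp.single p 1}

/-- The subspace `𝒲_l` of `𝒲`. -/
def Wl (L : Type) [Field L] {n : ℕ} (ε : Fin n → Bool) (l : ℕ) : Submodule L (W L ε) :=
  Submodule.span L {v | ∃ p : Idx ε, (∑ t, p.1 t) = l ∧ v = Finsupp.single p 1}

/-! ## The scalar field of formal Laurent series in `z` over `ℂ` -/

abbrev K : Type := LaurentSeries ℂ

/-- The power series `Σ_{c≥0} f(c) z^c` as an element of `K`. -/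
def mkS (f : ℕ → ℂ) : K := HahnSeries.ofPowerSeries ℤ ℂ (PowerSeries.mk f)

/-- Constants `ℂ → K`. -/
def cK : ℂ →+* K := HahnSeries.C

/-- The variable `z ∈ K`. -/
def zK : K := mkS fun c => if c = 1 then 1 else 0

/-! ## The solutions of the Yang-Baxter equation -/

/-- The unnormalized trace solution `S₀(z)` acting on `𝒲⊗𝒲`. -/
def S0tr (q : ℂ) {n : ℕ} [NeZero n] (ε : Fin n → Bool) : WW K ε →ₗ[K] WW K ε :=
  mkEnd K fun ij =>
    ∑ a ∈ Fintype.piFinset (fun t => Finset.range (ij.1.1 t + ij.2.1 t + 1)),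
      mkS (trCoef q ε a (fun t => ij.1.1 t + ij.2.1 t - a t) ij.1.1 ij.2.1) •
        kk K ε (fun t => (a t : ℤ)) (fun t => (ij.1.1 t : ℤ) + (ij.2.1 t : ℤ) - (a t : ℤ))

/-- The unnormalized boundary solution `S₀^{1,1}(z)` acting on `𝒲⊗𝒲`. -/
def S0bd (q : ℂ) {n : ℕ} (ε : Fin n → Bool) : WW K ε →ₗ[K] WW K ε :=
  mkEnd K fun ij =>
    ∑ a ∈ Fintype.piFinset (fun t => Finset.range (ij.1.1 t + ij.2.1 t + 1)),
      mkS (bdCoef q ε a (fun t => ij.1.1 t + ij.2.1 t - a t) ij.1.1 ij.2.1) •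
        kk K ε (fun t => (a t : ℤ)) (fun t => (ij.1.1 t : ℤ) + (ij.2.1 t : ℤ) - (a t : ℤ))

/-- The unnormalized boundary solution `S₀^{s,t}(z)` acting on `𝒲⊗𝒲`. -/
def S0bdST (q : ℂ) (s t : ℕ) {n : ℕ} (ε : Fin n → Bool) : WW K ε →ₗ[K] WW K ε :=
  mkEnd K fun ij =>
    ∑ a ∈ Fintype.piFinset (fun u => Finset.range (ij.1.1 u + ij.2.1 u + 1)),
      mkS (bdCoefST q s t ε a (fun u => ij.1.1 u + ij.2.1 u - a u) ij.1.1 ij.2.1) •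
        kk K ε (fun u => (a u : ℤ)) (fun u => (ij.1.1 u : ℤ) + (ij.2.1 u : ℤ) - (a u : ℤ))

/-- The diagonal gauge operator; `Kdiag pc ε s |m⟩ = pc^{s·(m₁+⋯+m_n)} |m⟩`
(`s = -1` gives `K`, `s = 1` gives `K⁻¹`). -/
def Kdiag (pc : ℂ) {n : ℕ} (ε : Fin n → Bool) (s : ℤ) : W K ε →ₗ[K] W K ε :=
  mkEnd K fun m => cK (pc ^ (s * ∑ t, (m.1 t : ℤ))) • Finsupp.single m 1

/-- The gauge transformed boundary solution `S̃₀^{1,1}(z) = (K⊗1) S₀^{1,1}(z) (1⊗K⁻¹)`. -/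
def S0bdT (q pc : ℂ) {n : ℕ} (ε : Fin n → Bool) : WW K ε →ₗ[K] WW K ε :=
  opT K (Kdiag pc ε (-1)) LinearMap.id ∘ₗ S0bd q ε ∘ₗ opT K LinearMap.id (Kdiag pc ε 1)

/-! ## The generalized quantum group actions -/

/-- Value of an occupation vector at a natural-number position. -/
def av {n : ℕ} (m : Fin n → ℕ) (p : ℕ) : ℕ := if h : p < n then m ⟨p, h⟩ else 0

/-- Unit coordinate vector at a natural-number position. -/
def dlt {n : ℕ} (p : ℕ) : Fin n → ℤ := fun t => if (t : ℕ) = p then 1 else 0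

/-- `q_i = q` if `ε_i = 0` and `-q⁻¹` if `ε_i = 1` (0-based positions). -/
def qc (q : ℂ) {n : ℕ} (ε : Fin n → Bool) (p : ℕ) : ℂ :=
  if h : p < n then (if ε ⟨p, h⟩ then -q⁻¹ else q) else q

/-- Type A generator `e_r` of the action `π_x`. -/
def eA (q : ℂ) {L : Type} [Field L] (ι : ℂ →+* L) {n : ℕ} (ε : Fin n → Bool) (x : L)
    (r : Fin n) : W L ε →ₗ[L] W L ε :=
  mkEnd L fun m =>
    (x ^ (if (r : ℕ) = 0 then 1 else 0) * ι (qnum q (av m.1 (((r : ℕ) + n - 1) % n)))) •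
      ket L ε fun t => (m.1 t : ℤ) - dlt (((r : ℕ) + n - 1) % n) t + dlt (r : ℕ) t

/-- Type A generator `f_r` of the action `π_x`. -/
def fA (q : ℂ) {L : Type} [Field L] (ι : ℂ →+* L) {n : ℕ} (ε : Fin n → Bool) (x : L)
    (r : Fin n) : W L ε →ₗ[L] W L ε :=
  mkEnd L fun m =>
    (x ^ (if (r : ℕ) = 0 then (-1 : ℤ) else 0) * ι (qnum q (av m.1 (r : ℕ)))) •
      ket L ε fun t => (m.1 t : ℤ) + dlt (((r : ℕ) + n - 1) % n) t - dlt (r : ℕ) t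

/-- Type A generator `k_r^{s}` (`s = ±1`) of the action `π_x`. -/
def kA (q : ℂ) {L : Type} [Field L] (ι : ℂ →+* L) {n : ℕ} (ε : Fin n → Bool) (s : ℤ)
    (r : Fin n) : W L ε →ₗ[L] W L ε :=
  mkEnd L fun m =>
    ι ((qc q ε (((r : ℕ) + n - 1) % n) ^ (-(av m.1 (((r : ℕ) + n - 1) % n) : ℤ)) *
        qc q ε (r : ℕ) ^ (av m.1 (r : ℕ) : ℤ)) ^ s) • Finsupp.single m 1

/-- Type B generator `e_r` of the action `π_x`. -/
def eB (q : ℂ) {L : Type} [Field L] (ι : ℂ →+* L) {n : ℕ} (ε : Fin n → Bool) (x : L)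
    (r : Fin (n + 1)) : W L ε →ₗ[L] W L ε :=
  mkEnd L fun m =>
    if (r : ℕ) = 0 then x • ket L ε (fun t => (m.1 t : ℤ) + dlt 0 t)
    else if (r : ℕ) = n then
      ι (qnum q (av m.1 (n - 1))) • ket L ε (fun t => (m.1 t : ℤ) - dlt (n - 1) t)
    else
      ι (qnum q (av m.1 ((r : ℕ) - 1))) •
        ket L ε (fun t => (m.1 t : ℤ) - dlt ((r : ℕ) - 1) t + dlt (r : ℕ) t)

/-- Type B generator `f_r` of the action `π_x`. -/
def fB (q : ℂ) {L : Type} [Field L] (ι : ℂ →+* L) {n : ℕ} (ε : Fin n → Bool) (x : L)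
    (r : Fin (n + 1)) : W L ε →ₗ[L] W L ε :=
  mkEnd L fun m =>
    if (r : ℕ) = 0 then
      (x⁻¹ * ι (qnum q (av m.1 0))) • ket L ε (fun t => (m.1 t : ℤ) - dlt 0 t)
    else if (r : ℕ) = n then ket L ε (fun t => (m.1 t : ℤ) + dlt (n - 1) t)
    else
      ι (qnum q (av m.1 (r : ℕ))) •
        ket L ε (fun t => (m.1 t : ℤ) + dlt ((r : ℕ) - 1) t - dlt (r : ℕ) t)

/-- Type B generator `k_r^{s}` (`s = ±1`) of the action `π_x`; `pc = i q^{-1/2}`. -/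
def kB (q pc : ℂ) {L : Type} [Field L] (ι : ℂ →+* L) {n : ℕ} (ε : Fin n → Bool) (s : ℤ)
    (r : Fin (n + 1)) : W L ε →ₗ[L] W L ε :=
  mkEnd L fun m =>
    ι ((if (r : ℕ) = 0 then pc⁻¹ * qc q ε 0 ^ (av m.1 0 : ℤ)
        else if (r : ℕ) = n then pc * qc q ε (n - 1) ^ (-(av m.1 (n - 1) : ℤ))
        else qc q ε ((r : ℕ) - 1) ^ (-(av m.1 ((r : ℕ) - 1) : ℤ)) *
          qc q ε (r : ℕ) ^ (av m.1 (r : ℕ) : ℤ)) ^ s) • Finsupp.single m 1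

/-! ## Coproduct actions on `𝒲⊗𝒲` (type A) -/

/-- `Δ(e_r) = 1⊗e_r + e_r⊗k_r`, with `π_x` on the first factor, `π_y` on the second. -/
def dE (q : ℂ) {L : Type} [Field L] (ι : ℂ →+* L) {n : ℕ} (ε : Fin n → Bool) (x y : L)
    (r : Fin n) : WW L ε →ₗ[L] WW L ε :=
  opT L LinearMap.id (eA q ι ε y r) + opT L (eA q ι ε x r) (kA q ι ε 1 r)

/-- `Δ'(e_r) = e_r⊗1 + k_r⊗e_r`. -/
def dE' (q : ℂ) {L : Type} [Field L] (ι : ℂ →+* L) {n : ℕ} (ε : Fin n → Bool) (x y : L)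
    (r : Fin n) : WW L ε →ₗ[L] WW L ε :=
  opT L (eA q ι ε x r) LinearMap.id + opT L (kA q ι ε 1 r) (eA q ι ε y r)

/-- `Δ(f_r) = f_r⊗1 + k_r⁻¹⊗f_r`. -/
def dF (q : ℂ) {L : Type} [Field L] (ι : ℂ →+* L) {n : ℕ} (ε : Fin n → Bool) (x y : L)
    (r : Fin n) : WW L ε →ₗ[L] WW L ε :=
  opT L (fA q ι ε x r) LinearMap.id + opT L (kA q ι ε (-1) r) (fA q ι ε y r)

/-- `Δ'(f_r) = 1⊗f_r + f_r⊗k_r⁻¹`. -/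
def dF' (q : ℂ) {L : Type} [Field L] (ι : ℂ →+* L) {n : ℕ} (ε : Fin n → Bool) (x y : L)
    (r : Fin n) : WW L ε →ₗ[L] WW L ε :=
  opT L LinearMap.id (fA q ι ε y r) + opT L (fA q ι ε x r) (kA q ι ε (-1) r)

/-- `Δ(k_r^s) = Δ'(k_r^s) = k_r^s ⊗ k_r^s`. -/
def dK (q : ℂ) {L : Type} [Field L] (ι : ℂ →+* L) {n : ℕ} (ε : Fin n → Bool) (s : ℤ)
    (r : Fin n) : WW L ε →ₗ[L] WW L ε :=
  opT L (kA q ι ε s r) (kA q ι ε s r)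

/-! ## Coproduct actions on `𝒲⊗𝒲` (type B) -/

def dEB (q pc : ℂ) {L : Type} [Field L] (ι : ℂ →+* L) {n : ℕ} (ε : Fin n → Bool) (x y : L)
    (r : Fin (n + 1)) : WW L ε →ₗ[L] WW L ε :=
  opT L LinearMap.id (eB q ι ε y r) + opT L (eB q ι ε x r) (kB q pc ι ε 1 r)

def dEB' (q pc : ℂ) {L : Type} [Field L] (ι : ℂ →+* L) {n : ℕ} (ε : Fin n → Bool) (x y : L)
    (r : Fin (n + 1)) : WW L ε →ₗ[L] WW L ε :=
  opT L (eB q ι ε x r) LinearMap.id + opT L (kB q pc ι ε 1 r) (eB q ι ε y r)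

def dFB (q pc : ℂ) {L : Type} [Field L] (ι : ℂ →+* L) {n : ℕ} (ε : Fin n → Bool) (x y : L)
    (r : Fin (n + 1)) : WW L ε →ₗ[L] WW L ε :=
  opT L (fB q ι ε x r) LinearMap.id + opT L (kB q pc ι ε (-1) r) (fB q ι ε y r)

def dFB' (q pc : ℂ) {L : Type} [Field L] (ι : ℂ →+* L) {n : ℕ} (ε : Fin n → Bool) (x y : L)
    (r : Fin (n + 1)) : WW L ε →ₗ[L] WW L ε :=
  opT L LinearMap.id (fB q ι ε y r) + opT L (fB q ι ε x r) (kB q pc ι ε (-1) r)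

def dKB (q pc : ℂ) {L : Type} [Field L] (ι : ℂ →+* L) {n : ℕ} (ε : Fin n → Bool) (s : ℤ)
    (r : Fin (n + 1)) : WW L ε →ₗ[L] WW L ε :=
  opT L (kB q pc ι ε s r) (kB q pc ι ε s r)

/-! ## Structure constants -/

/-- Type A structure constant `D_{i,j}` (as a product over 0-based positions). -/
def DA (q : ℂ) {n : ℕ} (ε : Fin n → Bool) (i j : Fin n) : ℂ :=
  ∏ p ∈ (({((i : ℕ) + n - 1) % n, (i : ℕ)} : Finset ℕ) ∩
      ({((j : ℕ) + n - 1) % n, (j : ℕ)} : Finset ℕ)),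
    qc q ε p ^ (if i = j then (1 : ℤ) else -1)

/-- The set `⟨i⟩ = {i, i+1} ∩ [1,n]` of type B, translated to 0-based positions. -/
def nodeB (n i : ℕ) : Finset ℕ :=
  if i = 0 then {0} else if i = n then {n - 1} else {i - 1, i}

/-- Type B structure constant `D_{i,j}`. -/
def DB (q : ℂ) {n : ℕ} (ε : Fin n → Bool) (i j : Fin (n + 1)) : ℂ :=
  ∏ p ∈ nodeB n (i : ℕ) ∩ nodeB n (j : ℕ), qc q ε p ^ (if i = j then (1 : ℤ) else -1)

/-! ## Distinguished vectors -/

/-- The vector `J_{n,j} = Σ_{i, Σi=j} q^{inv(i)} |i⟩⊗|1-i⟩`. -/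
def Jfull (q : ℂ) {L : Type} [Field L] (ι : ℂ →+* L) {n : ℕ} (ε : Fin n → Bool)
    (j : ℕ) : WW L ε :=
  ∑ i ∈ Fintype.piFinset (fun _ : Fin n => Finset.range 2),
    (if (∑ t, i t) = j then
        ι (q ^ (∑ s : Fin n, ∑ t : Fin n, if s < t then i s * (1 - i t) else 0))
      else 0) •
      kk L ε (fun t => (i t : ℤ)) (fun t => 1 - (i t : ℤ))

/-- Extension of a `Fin s`-tuple to `ℕ` by zero. -/
def ivf {s : ℕ} (i : Fin s → ℕ) : ℕ → ℕ := fun p => if h : p < s then i ⟨p, h⟩ else 0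

/-- `inv(i₁,…,i_s) = Σ_{p<r} i_p (1 - i_r)`. -/
def invv (s : ℕ) (iv : ℕ → ℕ) : ℕ :=
  ∑ p ∈ Finset.range s, ∑ r ∈ Finset.range s, if p < r then iv p * (1 - iv r) else 0

/-- Occupation vector `(0^{nn-s-t}, i₁,…,i_s, 1^t)`. -/
def winA (nn s t : ℕ) (iv : ℕ → ℕ) : Fin nn → ℤ := fun u =>
  if (u : ℕ) < nn - s - t then 0
  else if (u : ℕ) < nn - t then (iv ((u : ℕ) - (nn - s - t)) : ℤ)
  else 1

/-- The singular vector `ξ_t^{l,m}` for `κ = n`. -/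
def xiA (q : ℂ) {L : Type} [Field L] (ι : ℂ →+* L) {n : ℕ} (ε : Fin n → Bool)
    (l m t : ℕ) : WW L ε :=
  ∑ i ∈ Fintype.piFinset (fun _ : Fin (l + m - 2 * t) => Finset.range 2),
    (if (∑ u, i u) = l - t then ι (q ^ invv (l + m - 2 * t) (ivf i)) else 0) •
      kk L ε (winA n (l + m - 2 * t) t (ivf i))
        (winA n (l + m - 2 * t) t (fun p => 1 - ivf i p))

/-- Occupation vector `(0^{nn-s-1}, i₁,…,i_s, last)`. -/
def winA1 (nn s : ℕ) (iv : ℕ → ℕ) (last : ℤ) : Fin nn → ℤ := fun u =>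
  if (u : ℕ) < nn - s - 1 then 0
  else if (u : ℕ) < nn - 1 then (iv ((u : ℕ) - (nn - s - 1)) : ℤ)
  else last

/-- The singular vector `ξ_s^{l,m}` for `κ = n-1`. -/
def xiA1 (q : ℂ) {L : Type} [Field L] (ι : ℂ →+* L) {n : ℕ} (ε : Fin n → Bool)
    (l m s : ℕ) : WW L ε :=
  ∑ j ∈ Finset.range (s + 1),
    ∑ i ∈ Fintype.piFinset (fun _ : Fin s => Finset.range 2),
      (if (∑ u, i u) = s - j then
          ι ((-1 : ℂ) ^ j * q ^ (j * (m - s + 1)) * q ^ invv s (ivf i))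
        else 0) •
        kk L ε (winA1 n s (ivf i) ((l : ℤ) + (j : ℤ) - (s : ℤ)))
          (winA1 n s (fun p => 1 - ivf i p) ((m : ℤ) - (j : ℤ)))

/-- The singular vector `ξ_s^{l,m}` for `0 ≤ κ ≤ n-2`. -/
def xiA2 (q : ℂ) {L : Type} [Field L] (ι : ℂ →+* L) {n : ℕ} (ε : Fin n → Bool)
    (l m s : ℕ) : WW L ε :=
  ∑ j ∈ Finset.range (s + 1),
    ι ((-1 : ℂ) ^ j * q ^ ((j : ℤ) * (2 * (s : ℤ) - (m : ℤ) - (j : ℤ) - 1) + (m : ℤ) * (s : ℤ)) *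
        qbin q s j) •
      kk L ε
        (fun u => if (u : ℕ) < n - 2 then 0
          else if (u : ℕ) = n - 2 then (j : ℤ) else (l : ℤ) - (j : ℤ))
        (fun u => if (u : ℕ) < n - 2 then 0
          else if (u : ℕ) = n - 2 then (s : ℤ) - (j : ℤ) else (m : ℤ) - (s : ℤ) + (j : ℤ))

/-- The type B singular vector `ξ_l`. -/
def xiB (q pc : ℂ) {L : Type} [Field L] (ι : ℂ →+* L) {n : ℕ} (ε : Fin n → Bool)
    (l : ℕ) : WW L ε :=
  ∑ m ∈ Finset.range (l + 1),
    ι ((-pc) ^ (-(m : ℤ)) * q ^ ((m : ℤ) * (l : ℤ) - ((m * (m + 1) / 2 : ℕ) : ℤ)) *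
        qbin q l m) •
      kk L ε (fun u => if (u : ℕ) = n - 1 then (m : ℤ) else 0)
        (fun u => if (u : ℕ) = n - 1 then (l : ℤ) - (m : ℤ) else 0)

/-! ## Miscellany -/

/-- Apply a list of operators, the rightmost element of the list acting first. -/
def appList {L : Type} [Field L] {n : ℕ} {ε : Fin n → Bool}
    (ops : List (WW L ε →ₗ[L] WW L ε)) (v : WW L ε) : WW L ε :=
  ops.foldr (fun A w => A w) v

/-- A natural number as an element of `Fin n`. -/
def mfin {n : ℕ} [NeZero n] (p : ℕ) : Fin n :=
  ⟨p % n, Nat.mod_lt p (Nat.pos_of_ne_zero (NeZero.ne n))⟩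

/-- Reference weight-`l` occupation vector: `(0^{n-l},1^l)` if `κ = n`, `l·e_n` otherwise. -/
def refAN (n κ l : ℕ) : Fin n → ℕ := fun t =>
  if κ = n then (if n - l ≤ (t : ℕ) then 1 else 0) else (if (t : ℕ) = n - 1 then l else 0)

/-- The flip `P(u⊗v) = v⊗u` on `𝒲⊗𝒲`. -/
def Pop (L : Type) [Field L] {n : ℕ} (ε : Fin n → Bool) : WW L ε →ₗ[L] WW L ε :=
  mkEnd L fun p => Finsupp.single (p.2, p.1) 1

/-! ### Scalars -/

lemma qnum_ne_zero {q : ℂ} (hq0 : q ≠ 0) (hq : ∀ k : ℕ, k ≠ 0 → q ^ k ≠ 1) {m : ℕ}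
    (hm : m ≠ 0) : qnum q m ≠ 0 := by
  have key : ∀ k : ℕ, k ≠ 0 → q ^ k - q⁻¹ ^ k ≠ 0 := by
    intro k hk h
    apply hq (2 * k) (by omega)
    have h1 : q ^ k = (q ^ k)⁻¹ := by rw [← inv_pow]; exact sub_eq_zero.mp h
    have h0 : q ^ k ≠ 0 := pow_ne_zero _ hq0
    rw [two_mul, pow_add]
    nth_rw 2 [h1]
    exact mul_inv_cancel₀ h0
  have h1 := key 1 one_ne_zero
  rw [pow_one, pow_one] at h1
  exact div_ne_zero (key m hm) h1

lemma qc_ne_zero {q : ℂ} (hq0 : q ≠ 0) {n : ℕ} (ε : Fin n → Bool) (p : ℕ) : qc q ε p ≠ 0 := by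
  unfold qc
  split_ifs <;> simp [hq0]

/-- No `q_i` is a root of unity, so its powers are pairwise distinct. -/
lemma qc_pow_injective {q : ℂ} (hq0 : q ≠ 0) (hq : ∀ k : ℕ, k ≠ 0 → q ^ k ≠ 1) {n : ℕ}
    (ε : Fin n → Bool) (p : ℕ) : Function.Injective (fun s : ℕ => qc q ε p ^ s) := by
  have hroot : ∀ k : ℕ, k ≠ 0 → qc q ε p ^ k ≠ 1 := by
    intro k hk h
    -- squaring removes the sign in `-q⁻¹`
    have h2 : (qc q ε p ^ 2) ^ k = 1 := by rw [← pow_mul, mul_comm, pow_mul, h, one_pow]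
    apply hq (2 * k) (by omega)
    unfold qc at h2
    split_ifs at h2
    · rw [neg_sq, inv_pow, inv_pow, inv_eq_one] at h2
      rw [pow_mul, h2]
    · rw [pow_mul, h2]
    · rw [pow_mul, h2]
  have hle : ∀ s t : ℕ, s ≤ t → qc q ε p ^ s = qc q ε p ^ t → s = t := by
    intro s t hst h
    by_contra hne
    apply hroot (t - s) (by omega)
    have h0 : qc q ε p ^ s ≠ 0 := pow_ne_zero _ (qc_ne_zero hq0 ε p)
    apply mul_left_cancel₀ h0
    rw [← pow_add, Nat.add_sub_cancel' hst, mul_one, h]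
  intro s t h
  rcases le_total s t with hst | hst
  · exact hle s t hst h
  · exact (hle t s hst h.symm).symm

/-- The indeterminates `x = C X` and `y = X` are linearly independent over the constants `ℂ`. -/
lemma xy_indep (A B : ℂ)
    (h : (RatFunc.C (RatFunc.X : RatFunc ℂ) : RatFunc (RatFunc ℂ)) *
        (RatFunc.C.comp RatFunc.C : ℂ →+* RatFunc (RatFunc ℂ)) A +
      RatFunc.X * (RatFunc.C.comp RatFunc.C : ℂ →+* RatFunc (RatFunc ℂ)) B = 0) : A = 0 ∧ B = 0 := by
  have h1 : algebraMap (Polynomial (RatFunc ℂ)) (RatFunc (RatFunc ℂ))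
      (Polynomial.C ((RatFunc.X : RatFunc ℂ) * RatFunc.C A) + Polynomial.X * Polynomial.C (RatFunc.C B)) = 0 := by
    rw [map_add, map_mul (algebraMap _ _), RatFunc.algebraMap_C, RatFunc.algebraMap_C, RatFunc.algebraMap_X,
      map_mul RatFunc.C]
    exact h
  have h2 := (map_eq_zero_iff _ (RatFunc.algebraMap_injective (RatFunc ℂ))).mp h1
  have h3 := congrArg (fun P => Polynomial.coeff P 0) h2
  have h4 := congrArg (fun P => Polynomial.coeff P 1) h2
  simp [Polynomial.coeff_C] at h3 h4
  exact ⟨by simpa [RatFunc.X_ne_zero] using h3, h4⟩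

/-! ### Weights and occupation vectors with integer entries -/

/-- The change of the occupation vector under `e_r`: one particle moves from position `r - 1` to
position `r`. Positions are counted from `0`; since `dlt n = 0`, the cases `r = 0` (creation) and
`r = n` (annihilation) are covered. -/
def sh {n : ℕ} (r : ℕ) : Fin n → ℤ := dlt r - (if r = 0 then 0 else dlt (r - 1))

/-- `a` has entries in the admissible range. -/
def Rg {n : ℕ} (ε : Fin n → Bool) (a : Fin n → ℤ) : Prop :=
  (∀ t, 0 ≤ a t) ∧ Ok ε (fun t => (a t).toNat)

/-- The occupation vector of a basis label, with integer entries. -/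
def zz {n : ℕ} {ε : Fin n → Bool} (m : Idx ε) : Fin n → ℤ := fun t => (m.1 t : ℤ)

/-- The height of a weight: each particle counts with the number of steps to the right after which
`e_n` annihilates it. Thus `e_1, …, e_n` lower the height by one. -/
def ht {n : ℕ} (c : Fin n → ℤ) : ℤ := ∑ t : Fin n, ((n : ℤ) - t) * c t

lemma Rg_iff {n : ℕ} {ε : Fin n → Bool} {a : Fin n → ℤ} :
    Rg ε a ↔ ∀ t, 0 ≤ a t ∧ (ε t = true → a t ≤ 1) := by
  unfold Rg Ok
  constructor
  · rintro ⟨h1, h2⟩ t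
    refine ⟨h1 t, fun h => ?_⟩
    have : (a t).toNat ≤ 1 := h2 t h
    omega
  · intro h
    refine ⟨fun t => (h t).1, fun t ht => ?_⟩
    have := (h t).2 ht
    show (a t).toNat ≤ 1
    omega

lemma Rg_zz {n : ℕ} {ε : Fin n → Bool} (m : Idx ε) : Rg ε (zz m) := by
  refine Rg_iff.mpr fun t => ⟨by simp [zz], fun h => ?_⟩
  have := m.2 t h
  simp only [zz]
  omega

lemma Rg.exists_zz {n : ℕ} {ε : Fin n → Bool} {a : Fin n → ℤ} (h : Rg ε a) :
    ∃ m : Idx ε, zz m = a :=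
  ⟨⟨_, h.2⟩, funext fun t => Int.toNat_of_nonneg (h.1 t)⟩

lemma zz_injective {n : ℕ} {ε : Fin n → Bool} : Function.Injective (zz (ε := ε)) := by
  intro m m' h
  apply Subtype.ext
  funext t
  have := congrFun h t
  simpa [zz] using this

lemma dlt_apply {n : ℕ} (p : ℕ) (t : Fin n) : dlt p t = if (t : ℕ) = p then 1 else 0 := rfl

lemma dlt_self {n : ℕ} : (dlt n : Fin n → ℤ) = 0 := by
  funext t
  have := t.2
  simp only [dlt_apply, Pi.zero_apply]
  rw [if_neg (by omega)]

lemma sh_zero {n : ℕ} : (sh 0 : Fin n → ℤ) = dlt 0 := by simp [sh]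

lemma sh_succ {n : ℕ} (r : ℕ) : (sh (r + 1) : Fin n → ℤ) = dlt (r + 1) - dlt r := by simp [sh]

lemma Rg_zero {n : ℕ} {ε : Fin n → Bool} : Rg ε 0 := Rg_iff.mpr fun t => by simp

lemma Rg_dlt {n : ℕ} {ε : Fin n → Bool} (p : ℕ) : Rg ε (dlt p) := by
  refine Rg_iff.mpr fun t => ?_
  rw [dlt_apply]
  split_ifs <;> simp

lemma ht_add {n : ℕ} (a b : Fin n → ℤ) : ht (a + b) = ht a + ht b := by
  simp [ht, mul_add, Finset.sum_add_distrib]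

lemma ht_sub {n : ℕ} (a b : Fin n → ℤ) : ht (a - b) = ht a - ht b := by
  simp [ht, mul_sub, Finset.sum_sub_distrib]

lemma ht_dlt {n : ℕ} {r : ℕ} (hr : r ≤ n) : ht (dlt r : Fin n → ℤ) = (n : ℤ) - r := by
  rcases hr.eq_or_lt with rfl | h
  · rw [dlt_self]; simp [ht]
  · unfold ht
    rw [Finset.sum_eq_single (⟨r, h⟩ : Fin n)]
    · simp [dlt_apply]
    · intro t _ hne
      have : (t : ℕ) ≠ r := fun h' => hne (Fin.ext h')
      simp [dlt_apply, this]
    · simp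

lemma ht_sh_succ {n : ℕ} {r : ℕ} (hr : r < n) : ht (sh (r + 1) : Fin n → ℤ) = -1 := by
  rw [sh_succ, ht_sub, ht_dlt hr, ht_dlt hr.le]
  push_cast
  ring

lemma ht_nonneg {n : ℕ} {c : Fin n → ℤ} (hc : ∀ t, 0 ≤ c t) : 0 ≤ ht c :=
  Finset.sum_nonneg fun t _ => mul_nonneg (by have := t.2; omega) (hc t)

/-- The leftmost occupied position. -/
lemma exists_first {n : ℕ} {c : Fin n → ℤ} (hc : c ≠ 0) :
    ∃ j : Fin n, c j ≠ 0 ∧ ∀ t < j, c t = 0 := by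
  obtain ⟨t, ht⟩ := Function.ne_iff.mp hc
  obtain ⟨j, hj, hmin⟩ := Finset.exists_min_image (Finset.univ.filter fun t => c t ≠ 0) id
    ⟨t, by simpa using ht⟩
  refine ⟨j, by simpa using hj, fun s hs => ?_⟩
  by_contra h
  exact absurd (hmin s (by simpa using h)) (not_le.mpr hs)

/-- The only occupation vector from which no `e_r` with `r ≥ 1` leads to another one is the
vacuum: the rightmost particle can always be moved to the right or be annihilated. -/
lemma exists_move {n : ℕ} {ε : Fin n → Bool} {b : Fin n → ℤ} (hb : Rg ε b) (h0 : b ≠ 0) :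
    ∃ r < n, Rg ε (b + sh (r + 1)) := by
  obtain ⟨t, ht⟩ := Function.ne_iff.mp h0
  obtain ⟨j, hj, hmax⟩ := Finset.exists_max_image (Finset.univ.filter fun t => b t ≠ 0) id
    ⟨t, by simpa using ht⟩
  have hj0 : b j ≠ 0 := by simpa using hj
  refine ⟨j, j.2, Rg_iff.mpr fun s => ?_⟩
  have hs := Rg_iff.mp hb s
  have hz : (s : ℕ) = j + 1 → b s = 0 := by
    intro h
    by_contra h'
    have h1 : s ≤ j := hmax s (by simpa using h')
    have h2 : (s : ℕ) ≤ j := h1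
    omega
  have hjs : (s : ℕ) = j → b s ≠ 0 := by
    intro h
    rw [Fin.ext h]
    exact hj0
  rw [sh_succ]
  simp only [Pi.add_apply, Pi.sub_apply, dlt_apply]
  split_ifs with h1 h2 h2
  · omega
  · have := hz h1
    omega
  · have := hjs h2
    refine ⟨by omega, fun h => ?_⟩
    have := hs.2 h
    omega
  · simpa using hs

/-! ### The vanishing criterion -/

/-- The heart of the argument. The functions `g r` record matrix coefficients of a vector (or of a
functional) of weight `c` for `r = j`, and of its images under the operators moving a particle from
position `j` to position `r`, for `r < j`. By `hsing`, the value of `g j` at `(c - δ_r, δ_r)` is a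
constant multiple of its value at `(c, 0)`: this is the end `r = n` of a chain of two-term
relations. By `hstep` and `hfin`, a combination of the values at `(c, 0)` and `(c - δ_j, δ_j)`
vanishes, whose coefficients are constants times `X` and `Y`. As `X / Y` is not constant, the value
at `(c, 0)` is zero, and `hsing` then propagates this to all pairs of weight `c`. -/
lemma core {L : Type} [Field L] (ι : ℂ →+* L) {n : ℕ} (ε : Fin n → Bool) (X Y : L)
    (hXY : ∀ A B : ℂ, X * ι A + Y * ι B = 0 → A = 0)
    (c : Fin n → ℤ) (j : Fin n) (hj : c j ≠ 0) (hlt : ∀ t < j, c t = 0)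
    (g : ℕ → (Fin n → ℤ) → (Fin n → ℤ) → L)
    (hz : ∀ r a b, ¬(Rg ε a ∧ Rg ε b) → g r a b = 0)
    (hsing : ∀ r < n, ∀ a b, Rg ε a → Rg ε b → Rg ε (b - sh (r + 1)) →
      a + b = c + sh (r + 1) → ∃ α β : ℂ, α ≠ 0 ∧
        ι α * g j a (b - sh (r + 1)) + ι β * g j (a - sh (r + 1)) b = 0)
    (hstep : ∀ r < (j : ℕ), ∀ a b, Rg ε a → Rg ε b → ∃ α β : ℂ,
      (Rg ε (a + sh (r + 1)) → α ≠ 0) ∧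
        g r a b = ι α * g (r + 1) (a + sh (r + 1)) b + ι β * g (r + 1) a (b + sh (r + 1)))
    (hfin : Rg ε (c - dlt j) → Rg ε (c - dlt j + dlt 0) → ∃ α β : ℂ, α ≠ 0 ∧
      X * ι α * g 0 (c - dlt j + dlt 0) 0 + Y * ι β * g 0 (c - dlt j) (dlt 0) = 0) :
    ∀ a b, a + b = c → g j a b = 0 := by
  have hgc : g j c 0 = 0 := by
    by_contra ht0
    have hRc : Rg ε c := by
      by_contra h
      exact ht0 (hz _ _ _ fun h' => h h'.1)
    -- downward chain of two-term relations, from `(c, 0)` to `(c - δ_j, δ_j)`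
    have hγ : ∀ k ≤ n, ∃ B : ℂ, g j (c - dlt (n - k)) (dlt (n - k)) = ι B * g j c 0 := by
      intro k
      induction k with
      | zero => intro _; exact ⟨1, by simp [dlt_self]⟩
      | succ k ih =>
        intro hk
        obtain ⟨B, hB⟩ := ih (by omega)
        obtain ⟨r, hr⟩ : ∃ r, r = n - (k + 1) := ⟨_, rfl⟩
        have hr1 : n - k = r + 1 := by omega
        rw [← hr]
        rw [hr1] at hB
        have e1 : (dlt (r + 1) - sh (r + 1) : Fin n → ℤ) = dlt r := by rw [sh_succ]; abel
        have e2 : c - dlt r - sh (r + 1) = c - dlt (r + 1) := by rw [sh_succ]; abel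
        by_cases hR : Rg ε (c - dlt r)
        · obtain ⟨α, β, hα, h⟩ := hsing r (by omega) (c - dlt r) (dlt (r + 1)) hR (Rg_dlt _)
            (by rw [e1]; exact Rg_dlt _) (by rw [sh_succ]; abel)
          rw [e1, e2, hB] at h
          refine ⟨-(β / α) * B, ?_⟩
          have hα' : ι α ≠ 0 := by simpa using hα
          rw [map_mul, map_neg, map_div₀]
          field_simp
          linear_combination h
        · exact ⟨0, by rw [hz _ _ _ fun h => hR h.1]; simp⟩
    obtain ⟨B₀, hB₀⟩ := hγ (n - j) (by omega)
    rw [show n - (n - (j : ℕ)) = j by have := j.2; omega] at hB₀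
    have hu : ∀ r < (j : ℕ), ∀ t : Fin n, (t : ℕ) = r → (c - dlt j : Fin n → ℤ) t = 0 := by
      intro r hr t htr
      have h1 : c t = 0 := hlt t (by rw [Fin.lt_def]; omega)
      simp only [Pi.sub_apply, dlt_apply, h1]
      rw [if_neg (by omega)]
      rfl
    have hcj : 1 ≤ c j := by
      have := (Rg_iff.mp hRc j).1
      omega
    have hRu : Rg ε (c - dlt j) := by
      refine Rg_iff.mpr fun t => ?_
      have h := Rg_iff.mp hRc t
      simp only [Pi.sub_apply, dlt_apply]
      split_ifs with h1
      · have h2 : t = j := Fin.ext h1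
        subst h2
        exact ⟨by omega, fun h3 => by have := h.2 h3; omega⟩
      · simpa using h
    have hRu' : ∀ r ≤ (j : ℕ), Rg ε (c - dlt j + dlt r) := by
      intro r hr
      rcases hr.eq_or_lt with rfl | hr
      · simpa using hRc
      · refine Rg_iff.mpr fun t => ?_
        have h := Rg_iff.mp hRu t
        rw [Pi.add_apply, dlt_apply]
        split_ifs with h1
        · rw [hu r hr t h1]; simp
        · simpa using h
    -- a particle cannot be moved away from an empty position
    have hneg : ∀ (a : Fin n → ℤ) (r : ℕ), r < (j : ℕ) → (∀ t : Fin n, (t : ℕ) = r → a t = 0) →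
        ¬ Rg ε (a + sh (r + 1)) := by
      intro a r hr ha hR
      have hrn : r < n := by have := j.2; omega
      have h := (Rg_iff.mp hR ⟨r, hrn⟩).1
      rw [sh_succ, Pi.add_apply, ha ⟨r, hrn⟩ rfl, Pi.sub_apply, dlt_apply, dlt_apply] at h
      simp at h
    have hAB : ∀ k ≤ (j : ℕ), ∃ A B : ℂ, A ≠ 0 ∧
        g (j - k) (c - dlt j + dlt (j - k)) 0 = ι A * g j c 0 ∧
        g (j - k) (c - dlt j) (dlt (j - k)) = ι B * g j c 0 := by
      intro k
      induction k with
      | zero => intro _; exact ⟨1, B₀, one_ne_zero, by simp, by simpa using hB₀⟩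
      | succ k ih =>
        intro hk
        obtain ⟨A, B, hA, h1, h2⟩ := ih (by omega)
        obtain ⟨r, hr⟩ : ∃ r, r = (j : ℕ) - (k + 1) := ⟨_, rfl⟩
        have hr1 : (j : ℕ) - k = r + 1 := by omega
        rw [← hr]
        rw [hr1] at h1 h2
        have e1 : c - dlt j + dlt r + sh (r + 1) = c - dlt j + dlt (r + 1) := by
          rw [sh_succ]; abel
        have e2 : (dlt r + sh (r + 1) : Fin n → ℤ) = dlt (r + 1) := by rw [sh_succ]; abel
        obtain ⟨α, β, hα, h3⟩ := hstep r (by omega) _ _ (hRu' r (by omega)) Rg_zero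
        obtain ⟨α', β', -, h4⟩ := hstep r (by omega) _ _ hRu (Rg_dlt r)
        rw [hz (r + 1) _ (0 + sh (r + 1))
          fun h => hneg 0 r (by omega) (fun _ _ => rfl) h.2, e1, h1] at h3
        rw [hz (r + 1) (c - dlt j + sh (r + 1)) _
          fun h => hneg _ r (by omega) (hu r (by omega)) h.1, e2, h2] at h4
        refine ⟨α * A, β' * B, mul_ne_zero (hα ?_) hA, ?_, ?_⟩
        · rw [e1]; exact hRu' _ (by omega)
        · rw [h3, map_mul]; ring
        · rw [h4, map_mul]; ring
    obtain ⟨A, B, hA, h1, h2⟩ := hAB j le_rfl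
    rw [Nat.sub_self] at h1 h2
    obtain ⟨α, β, hα, h3⟩ := hfin hRu (hRu' 0 (by omega))
    rw [h1, h2] at h3
    refine mul_ne_zero hα hA (hXY (α * A) (β * B) (mul_right_cancel₀ ht0 ?_))
    rw [map_mul, map_mul]
    linear_combination h3
  have main : ∀ N : ℕ, ∀ a b, ht b = N → a + b = c → g j a b = 0 := by
    intro N
    induction N using Nat.strong_induction_on with
    | _ N ih =>
      intro a b hN hab
      by_cases hR : Rg ε a ∧ Rg ε b
      swap
      · exact hz _ _ _ hR
      obtain ⟨hRa, hRb⟩ := hR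
      by_cases hb0 : b = 0
      · subst hb0
        rw [add_zero] at hab
        rw [hab, hgc]
      obtain ⟨r, hr, hRr⟩ := exists_move hRb hb0
      have hh : ht (b + sh (r + 1)) = ((N - 1 : ℕ) : ℤ) ∧ N ≠ 0 := by
        have h1 := ht_nonneg fun t => (Rg_iff.mp hRr t).1
        rw [ht_add, ht_sh_succ hr, hN] at h1 ⊢
        omega
      obtain ⟨α, β, hα, h⟩ := hsing r hr a (b + sh (r + 1)) hRa hRr
        (by rw [add_sub_cancel_right]; exact hRb) (by rw [← hab]; abel)
      rw [add_sub_cancel_right,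
        ih (N - 1) (by omega) (a - sh (r + 1)) (b + sh (r + 1)) hh.1 (by rw [← hab]; abel),
        mul_zero, add_zero] at h
      exact (mul_eq_zero.mp h).resolve_left (by simpa using hα)
  intro a b hab
  by_cases hR : Rg ε a ∧ Rg ε b
  · exact main (ht b).toNat a b
      (Int.toNat_of_nonneg (ht_nonneg fun t => (Rg_iff.mp hR.2 t).1)).symm hab
  · exact hz _ _ _ hR

/-! ### Matrix elements of the generators -/

lemma mkEnd_single (L : Type) [Field L] {α : Type} (v : α → (α →₀ L)) (m : α) :
    mkEnd L v (Finsupp.single m 1) = v m := by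
  simp [mkEnd]

lemma ket_zz (L : Type) [Field L] {n : ℕ} {ε : Fin n → Bool} (m : Idx ε) :
    ket L ε (zz m) = Finsupp.single m 1 := by
  have h := Rg_zz m
  exact (dif_pos h).trans rfl

lemma kk_zz (L : Type) [Field L] {n : ℕ} {ε : Fin n → Bool} (a b : Idx ε) :
    kk L ε (zz a) (zz b) = Finsupp.single (a, b) 1 := by
  have h : Rg ε (zz a) ∧ Rg ε (zz b) := ⟨Rg_zz a, Rg_zz b⟩
  exact (dif_pos h).trans rfl

lemma ket_eq_zero (L : Type) [Field L] {n : ℕ} {ε : Fin n → Bool} {a : Fin n → ℤ}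
    (h : ¬Rg ε a) : ket L ε a = 0 := dif_neg h

lemma kk_eq_zero (L : Type) [Field L] {n : ℕ} {ε : Fin n → Bool} {a b : Fin n → ℤ}
    (h : ¬(Rg ε a ∧ Rg ε b)) : kk L ε a b = 0 := dif_neg h

lemma tens_ket (L : Type) [Field L] {n : ℕ} {ε : Fin n → Bool} (s t : L) (a b : Fin n → ℤ) :
    tens L (s • ket L ε a) (t • ket L ε b) = (s * t) • kk L ε a b := by
  by_cases ha : Rg ε a
  swap
  · rw [ket_eq_zero L ha, kk_eq_zero L fun h => ha h.1]
    simp [tens]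
  by_cases hb : Rg ε b
  swap
  · rw [ket_eq_zero L hb, kk_eq_zero L fun h => hb h.2]
    simp [tens]
  obtain ⟨m, rfl⟩ := ha.exists_zz
  obtain ⟨m', rfl⟩ := hb.exists_zz
  rw [ket_zz, ket_zz, kk_zz]
  simp [tens, Finsupp.sum_single_index]

lemma opT_kk {L : Type} [Field L] {n : ℕ} {ε : Fin n → Bool} (A B : W L ε →ₗ[L] W L ε)
    {a b a' b' : Fin n → ℤ} {s t : L} (ha : Rg ε a) (hb : Rg ε b)
    (hA : A (ket L ε a) = s • ket L ε a') (hB : B (ket L ε b) = t • ket L ε b') :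
    opT L A B (kk L ε a b) = (s * t) • kk L ε a' b' := by
  obtain ⟨m, rfl⟩ := ha.exists_zz
  obtain ⟨m', rfl⟩ := hb.exists_zz
  rw [ket_zz] at hA hB
  rw [kk_zz, opT, mkEnd_single, hA, hB, tens_ket]

/-- The entry at position `p` of an occupation vector with integer entries. -/
def va {n : ℕ} (a : Fin n → ℤ) (p : ℕ) : ℕ := av (fun t => (a t).toNat) p

/-- The coefficient of `e_r`, without the spectral parameter. -/
def ce (q : ℂ) {n : ℕ} (r : ℕ) (a : Fin n → ℤ) : ℂ :=
  if r = 0 then 1 else qnum q (va a (r - 1))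

/-- The coefficient of `f_r`, without the spectral parameter. -/
def cf (q : ℂ) {n : ℕ} (r : ℕ) (a : Fin n → ℤ) : ℂ :=
  if r = n then 1 else qnum q (va a r)

/-- The eigenvalue of `k_r`. -/
def ck (q pc : ℂ) {n : ℕ} (ε : Fin n → Bool) (r : ℕ) (a : Fin n → ℤ) : ℂ :=
  if r = 0 then pc⁻¹ * qc q ε 0 ^ (va a 0 : ℤ)
  else if r = n then pc * qc q ε (n - 1) ^ (-(va a (n - 1) : ℤ))
  else qc q ε (r - 1) ^ (-(va a (r - 1) : ℤ)) * qc q ε r ^ (va a r : ℤ)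

lemma va_zz {n : ℕ} {ε : Fin n → Bool} (m : Idx ε) (p : ℕ) : va (zz m) p = av m.1 p := by
  unfold va zz
  congr 1

lemma eB_ket (q : ℂ) {L : Type} [Field L] (ι : ℂ →+* L) {n : ℕ} (hn : 2 ≤ n) (ε : Fin n → Bool)
    (x : L) (r : Fin (n + 1)) {a : Fin n → ℤ} (ha : Rg ε a) :
    eB q ι ε x r (ket L ε a) =
      ((if (r : ℕ) = 0 then x else 1) * ι (ce q r a)) • ket L ε (a + sh r) := by
  obtain ⟨m, rfl⟩ := ha.exists_zz
  rw [ket_zz, eB, mkEnd_single]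
  unfold ce
  rw [va_zz]
  by_cases h0 : (r : ℕ) = 0
  · simp only [h0, if_true, map_one, mul_one, sh_zero]
    rfl
  · simp only [h0, if_false, one_mul]
    by_cases h1 : (r : ℕ) = n
    · simp only [h1, if_true]
      congr 2
      funext t
      have hn0 : n ≠ 0 := by omega
      simp [sh, hn0, dlt_self, zz, sub_eq_add_neg]
    · simp only [h1, if_false]
      congr 2
      funext t
      simp only [sh, h0, if_false, Pi.add_apply, Pi.sub_apply, zz]
      ring

lemma fB_ket (q : ℂ) {L : Type} [Field L] (ι : ℂ →+* L) {n : ℕ} (hn : 2 ≤ n) (ε : Fin n → Bool)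
    (x : L) (r : Fin (n + 1)) {a : Fin n → ℤ} (ha : Rg ε a) :
    fB q ι ε x r (ket L ε a) =
      ((if (r : ℕ) = 0 then x⁻¹ else 1) * ι (cf q r a)) • ket L ε (a - sh r) := by
  obtain ⟨m, rfl⟩ := ha.exists_zz
  rw [ket_zz, fB, mkEnd_single]
  unfold cf
  rw [va_zz]
  have hn0 : n ≠ 0 := by omega
  by_cases h0 : (r : ℕ) = 0
  · simp only [h0, if_true, sh_zero, if_neg hn0.symm]
    rfl
  · simp only [h0, if_false, one_mul]
    by_cases h1 : (r : ℕ) = n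
    · simp only [h1, if_true, map_one, one_smul]
      congr 1
      funext t
      simp [sh, hn0, dlt_self, zz]
    · simp only [h1, if_false]
      congr 2
      funext t
      simp only [sh, h0, if_false, Pi.sub_apply, zz]
      ring

lemma kB_ket (q pc : ℂ) {L : Type} [Field L] (ι : ℂ →+* L) {n : ℕ} (ε : Fin n → Bool)
    (s : ℤ) (r : Fin (n + 1)) {a : Fin n → ℤ} (ha : Rg ε a) :
    kB q pc ι ε s r (ket L ε a) = ι (ck q pc ε r a ^ s) • ket L ε a := by
  obtain ⟨m, rfl⟩ := ha.exists_zz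
  rw [ket_zz, kB, mkEnd_single]
  unfold ck
  rw [va_zz, va_zz, va_zz, va_zz]

lemma dEB_kk (q pc : ℂ) {L : Type} [Field L] (ι : ℂ →+* L) {n : ℕ} (hn : 2 ≤ n)
    (ε : Fin n → Bool) (x y : L) (r : Fin (n + 1)) {a b : Fin n → ℤ} (ha : Rg ε a)
    (hb : Rg ε b) :
    dEB q pc ι ε x y r (kk L ε a b) =
      ((if (r : ℕ) = 0 then y else 1) * ι (ce q r b)) • kk L ε a (b + sh r) +
      ((if (r : ℕ) = 0 then x else 1) * ι (ce q r a * ck q pc ε r b)) • kk L ε (a + sh r) b := by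
  rw [dEB, LinearMap.add_apply,
    opT_kk (s := 1) _ _ ha hb (by rw [LinearMap.id_apply, one_smul]) (eB_ket q ι hn ε y r hb),
    opT_kk _ _ ha hb (eB_ket q ι hn ε x r ha) (kB_ket q pc ι ε 1 r hb), one_mul, zpow_one,
    map_mul, mul_assoc]

lemma dFB_kk (q pc : ℂ) {L : Type} [Field L] (ι : ℂ →+* L) {n : ℕ} (hn : 2 ≤ n)
    (ε : Fin n → Bool) (x y : L) (r : Fin (n + 1)) {a b : Fin n → ℤ} (ha : Rg ε a)
    (hb : Rg ε b) :
    dFB q pc ι ε x y r (kk L ε a b) =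
      ((if (r : ℕ) = 0 then x⁻¹ else 1) * ι (cf q r a)) • kk L ε (a - sh r) b +
      ((if (r : ℕ) = 0 then y⁻¹ else 1) * ι ((ck q pc ε r a)⁻¹ * cf q r b)) •
        kk L ε a (b - sh r) := by
  rw [dFB, LinearMap.add_apply,
    opT_kk (t := 1) _ _ ha hb (fB_ket q ι hn ε x r ha) (by rw [LinearMap.id_apply, one_smul]),
    opT_kk _ _ ha hb (kB_ket q pc ι ε (-1) r ha) (fB_ket q ι hn ε y r hb), mul_one, zpow_neg_one,
    map_mul, mul_left_comm]

lemma dKB_kk (q pc : ℂ) {L : Type} [Field L] (ι : ℂ →+* L) {n : ℕ}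
    (ε : Fin n → Bool) (r : Fin (n + 1)) {a b : Fin n → ℤ} (ha : Rg ε a) (hb : Rg ε b) :
    dKB q pc ι ε 1 r (kk L ε a b) =
      ι (ck q pc ε r a * ck q pc ε r b) • kk L ε a b := by
  rw [dKB, opT_kk _ _ ha hb (kB_ket q pc ι ε 1 r ha) (kB_ket q pc ι ε 1 r hb), zpow_one, zpow_one,
    map_mul]

lemma va_pos {n : ℕ} {ε : Fin n → Bool} {a : Fin n → ℤ} {r : ℕ} (hr : r < n)
    (h' : Rg ε (a + sh (r + 1))) : va a r ≠ 0 := by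
  have h1 := (Rg_iff.mp h' ⟨r, hr⟩).1
  rw [sh_succ, Pi.add_apply, Pi.sub_apply, dlt_apply, dlt_apply] at h1
  simp only [va, av, dif_pos hr]
  simp at h1
  omega

lemma va_pos' {n : ℕ} {ε : Fin n → Bool} {a : Fin n → ℤ} {r : ℕ} (hr : r < n)
    (h' : Rg ε (a - sh r)) : va a r ≠ 0 := by
  have h1 := (Rg_iff.mp h' ⟨r, hr⟩).1
  rcases r with _ | r
  · rw [sh_zero, Pi.sub_apply, dlt_apply] at h1
    simp only [va, av, dif_pos hr]
    simp at h1
    omega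
  · rw [sh_succ, Pi.sub_apply, Pi.sub_apply, dlt_apply, dlt_apply] at h1
    simp only [va, av, dif_pos hr]
    simp at h1
    omega

lemma ce_ne_zero {q : ℂ} (hq0 : q ≠ 0) (hq : ∀ k : ℕ, k ≠ 0 → q ^ k ≠ 1) {n : ℕ}
    {ε : Fin n → Bool} {a : Fin n → ℤ} {r : ℕ} (hr : r ≤ n)
    (h' : Rg ε (a + sh r)) : ce q r a ≠ 0 := by
  rcases r with _ | r
  · simp [ce]
  · simp only [ce, Nat.add_sub_cancel, Nat.succ_ne_zero, if_false]
    exact qnum_ne_zero hq0 hq (va_pos (by omega) h')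

lemma cf_ne_zero {q : ℂ} (hq0 : q ≠ 0) (hq : ∀ k : ℕ, k ≠ 0 → q ^ k ≠ 1) {n : ℕ}
    {ε : Fin n → Bool} {a : Fin n → ℤ} {r : ℕ} (hr : r ≤ n)
    (h' : Rg ε (a - sh r)) : cf q r a ≠ 0 := by
  unfold cf
  split_ifs with h1
  · exact one_ne_zero
  · exact qnum_ne_zero hq0 hq (va_pos' (by omega) h')

lemma ck_ne_zero {q pc : ℂ} (hq0 : q ≠ 0) (hpc : pc ≠ 0) {n : ℕ} (ε : Fin n → Bool) (r : ℕ)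
    (a : Fin n → ℤ) : ck q pc ε r a ≠ 0 := by
  unfold ck
  split_ifs
  · exact mul_ne_zero (inv_ne_zero hpc) (zpow_ne_zero _ (qc_ne_zero hq0 _ _))
  · exact mul_ne_zero hpc (zpow_ne_zero _ (qc_ne_zero hq0 _ _))
  · exact mul_ne_zero (zpow_ne_zero _ (qc_ne_zero hq0 _ _)) (zpow_ne_zero _ (qc_ne_zero hq0 _ _))

/-- The joint eigenvalues of the `k_r` on `|a⟩⊗|b⟩` determine the weight `a + b`. -/
lemma weight_separation {q pc : ℂ} (hq0 : q ≠ 0) (hq : ∀ k : ℕ, k ≠ 0 → q ^ k ≠ 1)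
    (hpc : pc ≠ 0) {n : ℕ} {ε : Fin n → Bool} {a b a' b' : Fin n → ℤ} (ha : Rg ε a)
    (hb : Rg ε b) (ha' : Rg ε a') (hb' : Rg ε b')
    (h : ∀ r ≤ n, ck q pc ε r a * ck q pc ε r b = ck q pc ε r a' * ck q pc ε r b') :
    a + b = a' + b' := by
  have key : ∀ p < n, va a p + va b p = va a' p + va b' p := by
    intro p
    induction p with
    | zero =>
      intro hp
      have h1 := h 0 hp.le
      simp only [ck, if_true, zpow_natCast] at h1
      apply qc_pow_injective hq0 hq ε 0
      simp only [pow_add]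
      have h2 : pc⁻¹ * pc⁻¹ ≠ 0 := mul_ne_zero (inv_ne_zero hpc) (inv_ne_zero hpc)
      apply mul_left_cancel₀ h2
      linear_combination h1
    | succ p ih =>
      intro hp
      have h0 := ih (by omega)
      have h1 := h (p + 1) hp.le
      simp only [ck, Nat.succ_ne_zero, if_false, hp.ne, Nat.add_sub_cancel] at h1
      apply qc_pow_injective hq0 hq ε (p + 1)
      have hz := qc_ne_zero hq0 ε p
      have h2 : qc q ε p ^ (-(va a p : ℤ)) * qc q ε p ^ (-(va b p : ℤ)) =
          qc q ε p ^ (-(va a' p : ℤ)) * qc q ε p ^ (-(va b' p : ℤ)) := by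
        rw [← zpow_add₀ hz, ← zpow_add₀ hz]
        congr 1
        omega
      have h3 : qc q ε p ^ (-(va a p : ℤ)) * qc q ε p ^ (-(va b p : ℤ)) ≠ 0 :=
        mul_ne_zero (zpow_ne_zero _ hz) (zpow_ne_zero _ hz)
      simp only [pow_add]
      simp only [zpow_natCast] at h1
      apply mul_left_cancel₀ h3
      nth_rw 2 [h2]
      linear_combination h1
  funext t
  have h1 := key t t.2
  simp only [va, av, dif_pos t.2, Fin.eta] at h1
  have := ha.1 t
  have := hb.1 t
  have := ha'.1 t
  have := hb'.1 t
  simp only [Pi.add_apply]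
  omega

/-- The coefficient of a vector at `|a⟩⊗|b⟩`; it is `0` if any coordinate is out of range. -/
def ev (L : Type) [Field L] {n : ℕ} (ε : Fin n → Bool) (a b : Fin n → ℤ) : WW L ε →ₗ[L] L :=
  open Classical in
  if h : Rg ε a ∧ Rg ε b then
    Finsupp.lapply (⟨fun t => (a t).toNat, h.1.2⟩, ⟨fun t => (b t).toNat, h.2.2⟩)
  else 0

lemma ev_zz {L : Type} [Field L] {n : ℕ} {ε : Fin n → Bool} (a b : Idx ε) (v : WW L ε) :
    ev L ε (zz a) (zz b) v = v (a, b) := by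
  unfold ev
  rw [dif_pos ⟨Rg_zz a, Rg_zz b⟩]
  rfl

lemma ev_eq_zero {L : Type} [Field L] {n : ℕ} {ε : Fin n → Bool} {a b : Fin n → ℤ}
    (h : ¬(Rg ε a ∧ Rg ε b)) (v : WW L ε) : ev L ε a b v = 0 := by
  unfold ev
  rw [dif_neg h]
  rfl

lemma ev_kk {L : Type} [Field L] {n : ℕ} {ε : Fin n → Bool} {a b : Fin n → ℤ}
    (ha : Rg ε a) (hb : Rg ε b) (a' b' : Fin n → ℤ) :
    ev L ε a b (kk L ε a' b') = if a' = a ∧ b' = b then 1 else 0 := by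
  by_cases h : Rg ε a' ∧ Rg ε b'
  · obtain ⟨m, rfl⟩ := ha.exists_zz
    obtain ⟨m', rfl⟩ := hb.exists_zz
    obtain ⟨l, rfl⟩ := h.1.exists_zz
    obtain ⟨l', rfl⟩ := h.2.exists_zz
    classical
    rw [kk_zz, ev_zz, Finsupp.single_apply]
    simp [zz_injective.eq_iff]
  · rw [kk_eq_zero L h, map_zero, if_neg]
    rintro ⟨rfl, rfl⟩
    exact h ⟨ha, hb⟩

lemma ev_kk' {L : Type} [Field L] {n : ℕ} {ε : Fin n → Bool} {a' b' : Fin n → ℤ}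
    (ha : Rg ε a') (hb : Rg ε b') (a b : Fin n → ℤ) :
    ev L ε a b (kk L ε a' b') = if a' = a ∧ b' = b then 1 else 0 := by
  by_cases h : Rg ε a ∧ Rg ε b
  · exact ev_kk h.1 h.2 _ _
  · rw [ev_eq_zero h, if_neg]
    rintro ⟨rfl, rfl⟩
    exact h ⟨ha, hb⟩

lemma ext_kk {L M : Type} [Field L] [AddCommGroup M] [Module L M] {n : ℕ} {ε : Fin n → Bool}
    {φ ψ : WW L ε →ₗ[L] M}
    (h : ∀ a b, Rg ε a → Rg ε b → φ (kk L ε a b) = ψ (kk L ε a b)) : φ = ψ := by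
  apply Finsupp.lhom_ext'
  rintro ⟨m, m'⟩
  apply LinearMap.ext_ring
  have := h _ _ (Rg_zz m) (Rg_zz m')
  rw [kk_zz] at this
  simpa using this

/-- The coefficients of `Δ(e_r) v` in terms of those of `v`. -/
lemma ev_dEB (q pc : ℂ) {L : Type} [Field L] (ι : ℂ →+* L) {n : ℕ} (hn : 2 ≤ n)
    (ε : Fin n → Bool) (x y : L) (r : Fin (n + 1)) {a b : Fin n → ℤ} (ha : Rg ε a)
    (hb : Rg ε b) (v : WW L ε) :
    ev L ε a b (dEB q pc ι ε x y r v) =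
      ((if (r : ℕ) = 0 then y else 1) * ι (ce q r (b - sh r))) * ev L ε a (b - sh r) v +
      ((if (r : ℕ) = 0 then x else 1) * ι (ce q r (a - sh r) * ck q pc ε r b)) *
        ev L ε (a - sh r) b v := by
  have h : (ev L ε a b).comp (dEB q pc ι ε x y r) =
      ((if (r : ℕ) = 0 then y else 1) * ι (ce q r (b - sh r))) • ev L ε a (b - sh r) +
      ((if (r : ℕ) = 0 then x else 1) * ι (ce q r (a - sh r) * ck q pc ε r b)) •
        ev L ε (a - sh r) b := by
    apply ext_kk
    intro a' b' ha' hb'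
    have hsh : ∀ u w : Fin n → ℤ, u + sh r = w ↔ u = w - sh r := fun u w =>
      eq_sub_iff_add_eq.symm
    rw [LinearMap.comp_apply, dEB_kk q pc ι hn ε x y r ha' hb']
    simp only [map_add, map_smul, LinearMap.add_apply, LinearMap.smul_apply, ev_kk ha hb,
      ev_kk' ha' hb', smul_eq_mul, hsh]
    refine congrArg₂ (· + ·) ?_ ?_
    · by_cases h1 : a' = a ∧ b' = b - sh r
      · rw [if_pos h1, h1.2]
      · rw [if_neg h1, mul_zero, mul_zero]
    · by_cases h1 : a' = a - sh r ∧ b' = b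
      · rw [if_pos h1, h1.1, h1.2]
      · rw [if_neg h1, mul_zero, mul_zero]
  exact congrArg (fun φ => φ v) h

/-- The coefficients of `Δ(f_r) v` in terms of those of `v`. -/
lemma ev_dFB (q pc : ℂ) {L : Type} [Field L] (ι : ℂ →+* L) {n : ℕ} (hn : 2 ≤ n)
    (ε : Fin n → Bool) (x y : L) (r : Fin (n + 1)) {a b : Fin n → ℤ} (ha : Rg ε a)
    (hb : Rg ε b) (v : WW L ε) :
    ev L ε a b (dFB q pc ι ε x y r v) =
      ((if (r : ℕ) = 0 then x⁻¹ else 1) * ι (cf q r (a + sh r))) * ev L ε (a + sh r) b v +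
      ((if (r : ℕ) = 0 then y⁻¹ else 1) * ι ((ck q pc ε r a)⁻¹ * cf q r (b + sh r))) *
        ev L ε a (b + sh r) v := by
  have h : (ev L ε a b).comp (dFB q pc ι ε x y r) =
      ((if (r : ℕ) = 0 then x⁻¹ else 1) * ι (cf q r (a + sh r))) • ev L ε (a + sh r) b +
      ((if (r : ℕ) = 0 then y⁻¹ else 1) * ι ((ck q pc ε r a)⁻¹ * cf q r (b + sh r))) •
        ev L ε a (b + sh r) := by
    apply ext_kk
    intro a' b' ha' hb'
    have hsh : ∀ u w : Fin n → ℤ, u - sh r = w ↔ u = w + sh r := fun u w =>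
      sub_eq_iff_eq_add
    rw [LinearMap.comp_apply, dFB_kk q pc ι hn ε x y r ha' hb']
    simp only [map_add, map_smul, LinearMap.add_apply, LinearMap.smul_apply, ev_kk ha hb,
      ev_kk' ha' hb', smul_eq_mul, hsh]
    refine congrArg₂ (· + ·) ?_ ?_
    · by_cases h1 : a' = a + sh r ∧ b' = b
      · rw [if_pos h1, h1.1]
      · rw [if_neg h1, mul_zero, mul_zero]
    · by_cases h1 : a' = a ∧ b' = b + sh r
      · rw [if_pos h1, h1.1, h1.2]
      · rw [if_neg h1, mul_zero, mul_zero]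
  exact congrArg (fun φ => φ v) h

lemma ev_dKB (q pc : ℂ) {L : Type} [Field L] (ι : ℂ →+* L) {n : ℕ}
    (ε : Fin n → Bool) (r : Fin (n + 1)) {a b : Fin n → ℤ} (ha : Rg ε a) (hb : Rg ε b)
    (v : WW L ε) :
    ev L ε a b (dKB q pc ι ε 1 r v) =
      ι (ck q pc ε r a * ck q pc ε r b) * ev L ε a b v := by
  have h : (ev L ε a b).comp (dKB q pc ι ε 1 r) =
      ι (ck q pc ε r a * ck q pc ε r b) • ev L ε a b := by
    apply ext_kk
    intro a' b' ha' hb'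
    rw [LinearMap.comp_apply, dKB_kk q pc ι ε r ha' hb']
    simp only [map_smul, LinearMap.smul_apply, ev_kk ha hb, smul_eq_mul]
    split_ifs with h1
    · rw [h1.1, h1.2]
    · simp
  exact congrArg (fun φ => φ v) h


/-! ### Weight vectors -/

/-- `v` is a weight vector of weight `c`: its support consists of pairs `(a, b)` with
`a + b = c`. The zero vector has every weight. -/
def HasWt {L : Type} [Field L] {n : ℕ} {ε : Fin n → Bool} (v : WW L ε) (c : Fin n → ℤ) : Prop :=
  ∀ a b, ev L ε a b v ≠ 0 → a + b = c

/-- `U` is invariant under all `Δ(e_r)`, `Δ(f_r)` and `Δ(k_r)`. -/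
def IsInvariant (q pc : ℂ) {L : Type} [Field L] (ι : ℂ →+* L) {n : ℕ} (ε : Fin n → Bool) (x y : L)
    (U : Submodule L (WW L ε)) : Prop :=
  ∀ r : Fin (n + 1), ∀ v ∈ U, dEB q pc ι ε x y r v ∈ U ∧ dFB q pc ι ε x y r v ∈ U ∧
    dKB q pc ι ε 1 r v ∈ U

lemma eq_zero_of_ev {L : Type} [Field L] {n : ℕ} {ε : Fin n → Bool} {v : WW L ε}
    (h : ∀ a b, ev L ε a b v = 0) : v = 0 := by
  apply Finsupp.ext
  rintro ⟨m, m'⟩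
  rw [← ev_zz, h]
  rfl

lemma rg_of_ev {L : Type} [Field L] {n : ℕ} {ε : Fin n → Bool} {v : WW L ε} {a b : Fin n → ℤ}
    (h : ev L ε a b v ≠ 0) : Rg ε a ∧ Rg ε b := by
  by_contra h'
  exact h (ev_eq_zero h' v)

lemma HasWt.dEB {L : Type} [Field L] (q pc : ℂ) (ι : ℂ →+* L) {n : ℕ} (hn : 2 ≤ n)
    {ε : Fin n → Bool} (x y : L) (r : Fin (n + 1)) {v : WW L ε} {c : Fin n → ℤ}
    (h : HasWt v c) : HasWt (dEB q pc ι ε x y r v) (c + sh r) := by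
  intro a b hab
  obtain ⟨ha, hb⟩ := rg_of_ev hab
  by_contra hne
  apply hab
  rw [ev_dEB q pc ι hn ε x y r ha hb]
  have h1 : ev L ε a (b - sh r) v = 0 := by
    by_contra h'
    exact hne (by rw [← h _ _ h']; abel)
  have h2 : ev L ε (a - sh r) b v = 0 := by
    by_contra h'
    exact hne (by rw [← h _ _ h']; abel)
  rw [h1, h2, mul_zero, mul_zero, add_zero]

lemma HasWt.dFB {L : Type} [Field L] (q pc : ℂ) (ι : ℂ →+* L) {n : ℕ} (hn : 2 ≤ n)
    {ε : Fin n → Bool} (x y : L) (r : Fin (n + 1)) {v : WW L ε} {c : Fin n → ℤ}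
    (h : HasWt v c) : HasWt (dFB q pc ι ε x y r v) (c - sh r) := by
  intro a b hab
  obtain ⟨ha, hb⟩ := rg_of_ev hab
  by_contra hne
  apply hab
  rw [ev_dFB q pc ι hn ε x y r ha hb]
  have h1 : ev L ε a (b + sh r) v = 0 := by
    by_contra h'
    exact hne (by rw [← h _ _ h']; abel)
  have h2 : ev L ε (a + sh r) b v = 0 := by
    by_contra h'
    exact hne (by rw [← h _ _ h']; abel)
  rw [h1, h2, mul_zero, mul_zero, add_zero]

/-- A nonzero vector of minimal support is a weight vector: otherwise `k_r v - λ v`, for a suitable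
`k_r` and eigenvalue `λ`, is nonzero with strictly smaller support. -/
lemma exists_weight_vector {q pc : ℂ} (hq0 : q ≠ 0) (hq : ∀ k : ℕ, k ≠ 0 → q ^ k ≠ 1)
    (hpc : pc ≠ 0) {L : Type} [Field L] (ι : ℂ →+* L) {n : ℕ} {ε : Fin n → Bool}
    {x y : L} {U : Submodule L (WW L ε)} (hU : IsInvariant q pc ι ε x y U) (hne : U ≠ ⊥) :
    ∃ v ∈ U, v ≠ 0 ∧ ∃ c, HasWt v c := by
  classical
  obtain ⟨u, huU, hu0⟩ := Submodule.exists_mem_ne_zero_of_ne_bot hne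
  suffices key : ∀ N : ℕ, ∀ v ∈ U, v ≠ 0 → v.support.card = N →
      ∃ v ∈ U, v ≠ 0 ∧ ∃ c, HasWt v c from key _ u huU hu0 rfl
  intro N
  induction N using Nat.strong_induction_on with
  | _ N ih =>
    intro v hvU hv0 hN
    by_cases hw : ∃ c, HasWt v c
    · exact ⟨v, hvU, hv0, hw⟩
    push Not at hw
    obtain ⟨⟨m, m'⟩, hm⟩ := Finsupp.support_nonempty_iff.mpr hv0
    have hw' := hw (zz m + zz m')
    unfold HasWt at hw'
    push Not at hw'
    obtain ⟨a, b, hab, hab'⟩ := hw'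
    obtain ⟨ha, hb⟩ := rg_of_ev hab
    have hr : ∃ r ≤ n, ck q pc ε r a * ck q pc ε r b ≠
        ck q pc ε r (zz m) * ck q pc ε r (zz m') := by
      by_contra h
      push Not at h
      exact hab' (weight_separation hq0 hq hpc ha hb (Rg_zz m) (Rg_zz m') h)
    obtain ⟨r, hrn, hr⟩ := hr
    obtain ⟨ρ, hρ⟩ : ∃ ρ : Fin (n + 1), (ρ : ℕ) = r := ⟨⟨r, by omega⟩, rfl⟩
    rw [← hρ] at hr
    obtain ⟨v', hv'⟩ : ∃ v', v' = dKB q pc ι ε 1 ρ v -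
      ι (ck q pc ε ρ (zz m) * ck q pc ε ρ (zz m')) • v := ⟨_, rfl⟩
    have hev : ∀ a b, Rg ε a → Rg ε b → ev L ε a b v' =
        ι (ck q pc ε ρ a * ck q pc ε ρ b - ck q pc ε ρ (zz m) * ck q pc ε ρ (zz m')) *
          ev L ε a b v := by
      intro a b ha hb
      rw [hv', map_sub, map_smul, ev_dKB q pc ι ε ρ ha hb, smul_eq_mul, map_sub, sub_mul]
    refine ih _ ?_ v' ?_ ?_ rfl
    · rw [← hN]
      apply Finset.card_lt_card
      rw [Finset.ssubset_iff_of_subset]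
      · refine ⟨(m, m'), hm, ?_⟩
        rw [Finsupp.notMem_support_iff, ← ev_zz, hev _ _ (Rg_zz m) (Rg_zz m')]
        simp
      · rintro ⟨l, l'⟩ hl
        rw [Finsupp.mem_support_iff, ← ev_zz] at hl ⊢
        intro h
        rw [hev _ _ (Rg_zz l) (Rg_zz l'), h, mul_zero] at hl
        exact hl rfl
    · rw [hv']
      exact U.sub_mem (hU ρ v hvU).2.2 (U.smul_mem _ hvU)
    · rintro rfl
      have h := hev a b ha hb
      rw [map_zero] at h
      refine mul_ne_zero ?_ hab h.symm
      rw [Ne, map_eq_zero, sub_eq_zero]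
      exact hr

/-! ### Every nonzero invariant subspace contains the vacuum -/

lemma exists_chain {α : Type} (j : ℕ) (F : ℕ → α → α) (v : α) :
    ∃ w : ℕ → α, w j = v ∧ ∀ r < j, w r = F (r + 1) (w (r + 1)) := by
  induction j generalizing v with
  | zero => exact ⟨fun _ => v, rfl, fun r hr => absurd hr (Nat.not_lt_zero r)⟩
  | succ j ih =>
    obtain ⟨w, h1, h2⟩ := ih (F (j + 1) v)
    refine ⟨fun r => if r = j + 1 then v else w r, by simp, ?_⟩
    intro r hr
    rcases (Nat.lt_succ_iff.mp hr).eq_or_lt with rfl | hr'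
    · simp [h1]
    · simp only [if_neg hr.ne, if_neg (show r + 1 ≠ j + 1 by omega)]
      exact h2 r hr'

/-- A nonzero weight vector of `U` not proportional to the vacuum can be replaced by one of smaller
height. Otherwise it is killed by every `e_r` with `r ≥ 1` and by `f_0 f_1 ⋯ f_j`, where `j` is the
first occupied position, and the vanishing criterion applies to its coefficients. -/
lemma vacuum_mem_of_weight {q pc : ℂ} (hq0 : q ≠ 0) (hq : ∀ k : ℕ, k ≠ 0 → q ^ k ≠ 1)
    {L : Type} [Field L] (ι : ℂ →+* L) {n : ℕ} (hn : 2 ≤ n)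
    {ε : Fin n → Bool} {x y : L} (hxy : ∀ A B : ℂ, x⁻¹ * ι A + y⁻¹ * ι B = 0 → A = 0)
    {U : Submodule L (WW L ε)} (hU : IsInvariant q pc ι ε x y U) :
    ∀ (N : ℕ) (v : WW L ε) (c : Fin n → ℤ), v ∈ U → v ≠ 0 → HasWt v c → ht c = N →
      kk L ε 0 0 ∈ U := by
  intro N
  induction N using Nat.strong_induction_on with
  | _ N ih =>
    intro v c hvU hv0 hw hN
    have hnonneg : ∀ {v : WW L ε} {c : Fin n → ℤ}, v ≠ 0 → HasWt v c → ∀ t, 0 ≤ c t := by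
      intro v c hv hw t
      by_contra hc
      refine hv (eq_zero_of_ev fun a b => ?_)
      by_contra hab
      obtain ⟨ha, hb⟩ := rg_of_ev hab
      rw [← hw a b hab] at hc
      exact hc (add_nonneg (ha.1 t) (hb.1 t))
    by_contra hvac
    have low : ∀ (v' : WW L ε) (c' : Fin n → ℤ), v' ∈ U → HasWt v' c' → ht c' < ht c →
        v' = 0 := by
      intro v' c' h1 h2 h3
      by_contra h4
      have h5 := ht_nonneg (hnonneg h4 h2)
      exact hvac (ih (ht c').toNat (by omega) v' c' h1 h4 h2 (by omega))
    by_cases hc0 : c = 0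
    · subst hc0
      -- in weight `0` only the vacuum occurs, as occupation numbers are nonnegative
      have h00 : ∀ a b, Rg ε a → Rg ε b → a + b = 0 → a = 0 ∧ b = 0 := by
        intro a b ha hb hab
        have : ∀ t, a t = 0 ∧ b t = 0 := by
          intro t
          have h1 := ha.1 t
          have h2 := hb.1 t
          have h3 : a t + b t = 0 := congrFun hab t
          omega
        exact ⟨funext fun t => (this t).1, funext fun t => (this t).2⟩
      have hv : v = ev L ε 0 0 v • kk L ε 0 0 := by
        rw [← sub_eq_zero]
        refine eq_zero_of_ev fun a b => ?_
        rw [map_sub, map_smul, ev_kk' Rg_zero Rg_zero, smul_eq_mul]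
        split_ifs with h
        · rw [← h.1, ← h.2, mul_one, sub_self]
        · rw [mul_zero, sub_zero]
          by_contra hab
          obtain ⟨ha, hb⟩ := rg_of_ev hab
          obtain ⟨h1, h2⟩ := h00 a b ha hb (hw a b hab)
          exact h ⟨h1.symm, h2.symm⟩
      have hs : ev L ε 0 0 v ≠ 0 := by
        intro h
        rw [h, zero_smul] at hv
        exact hv0 hv
      refine hvac ?_
      rw [hv] at hvU
      exact (U.smul_mem_iff hs).mp hvU
    obtain ⟨j, hj, hlt⟩ := exists_first hc0
    obtain ⟨w, hwj, hws⟩ := exists_chain (j : ℕ)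
      (fun r u => dFB q pc ι ε x y (Fin.ofNat (n + 1) r) u) v
    have hval : ∀ r ≤ n, ((Fin.ofNat (n + 1) r : Fin (n + 1)) : ℕ) = r := fun r hr => by
      rw [Fin.val_ofNat, Nat.mod_eq_of_lt (by omega)]
    have hjn := j.2
    have hwU : ∀ k ≤ (j : ℕ), w (j - k) ∈ U ∧ HasWt (w (j - k)) (c - dlt j + dlt (j - k)) := by
      intro k
      induction k with
      | zero =>
        intro _
        rw [Nat.sub_zero, hwj, sub_add_cancel]
        exact ⟨hvU, hw⟩
      | succ k ihk =>
        intro hk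
        obtain ⟨h1, h2⟩ := ihk (by omega)
        obtain ⟨r, hr⟩ : ∃ r, r = (j : ℕ) - (k + 1) := ⟨_, rfl⟩
        have hr1 : (j : ℕ) - k = r + 1 := by omega
        rw [hr1] at h1 h2
        rw [← hr, hws r (by omega)]
        refine ⟨(hU _ _ h1).2.1, ?_⟩
        have h3 := h2.dFB q pc ι hn x y (Fin.ofNat (n + 1) (r + 1))
        rw [hval _ (by omega), sh_succ] at h3
        convert h3 using 1
        abel
    have hE : ∀ r < n, dEB q pc ι ε x y (Fin.ofNat (n + 1) (r + 1)) v = 0 := by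
      intro r hr
      have h := hw.dEB q pc ι hn x y (Fin.ofNat (n + 1) (r + 1))
      rw [hval _ (by omega)] at h
      refine low _ _ (hU _ _ hvU).1 h ?_
      rw [ht_add, ht_sh_succ hr]
      omega
    have hF : dFB q pc ι ε x y (Fin.ofNat (n + 1) 0) (w 0) = 0 := by
      obtain ⟨h1, h2⟩ := hwU j le_rfl
      rw [Nat.sub_self] at h1 h2
      have h := h2.dFB q pc ι hn x y (Fin.ofNat (n + 1) 0)
      rw [hval _ (by omega), sh_zero, add_sub_cancel_right] at h
      refine low _ _ (hU _ _ h1).2.1 h ?_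
      rw [ht_sub, ht_dlt hjn.le]
      omega
    have hzero := core ι ε x⁻¹ y⁻¹ hxy c j hj hlt (fun r a b => ev L ε a b (w r))
      (fun r a b h => ev_eq_zero h _) ?_ ?_ ?_
    · simp only [hwj] at hzero
      refine hv0 (eq_zero_of_ev fun a b => ?_)
      by_contra hab
      exact hab (hzero a b (hw a b hab))
    · intro r hr a b ha hb hb' _
      have h := ev_dEB q pc ι hn ε x y (Fin.ofNat (n + 1) (r + 1)) ha hb v
      rw [hE r hr, map_zero, hval _ (by omega), if_neg (Nat.succ_ne_zero r),
        if_neg (Nat.succ_ne_zero r), one_mul, one_mul] at h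
      simp only [hwj]
      exact ⟨_, _, ce_ne_zero (ε := ε) hq0 hq (show r + 1 ≤ n by omega)
        (by rw [sub_add_cancel]; exact hb), h.symm⟩
    · intro r hr a b ha hb
      have h := ev_dFB q pc ι hn ε x y (Fin.ofNat (n + 1) (r + 1)) ha hb (w (r + 1))
      rw [hval _ (by omega), if_neg (Nat.succ_ne_zero r), if_neg (Nat.succ_ne_zero r), one_mul,
        one_mul] at h
      simp only [hws r hr]
      exact ⟨_, _, fun _ => cf_ne_zero (ε := ε) hq0 hq (show r + 1 ≤ n by omega)
        (by rw [add_sub_cancel_right]; exact ha), h⟩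
    · intro hR _
      have h := ev_dFB q pc ι hn ε x y (Fin.ofNat (n + 1) 0) hR Rg_zero (w 0)
      rw [hF, map_zero, hval _ (by omega), if_pos rfl, if_pos rfl, sh_zero, zero_add] at h
      exact ⟨_, _, cf_ne_zero (ε := ε) (r := 0) hq0 hq (Nat.zero_le n)
        (by rw [sh_zero, add_sub_cancel_right]; exact hR), h.symm⟩

/-! ### The vacuum generates everything -/

/-- The dual argument, by induction on the height of `a + b`: if `|a⟩⊗|b⟩ ∉ U`, some functional
`φ` vanishes on `U` but not on `|a⟩⊗|b⟩`. As `U` contains the basis vectors of smaller height,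
`φ ∘ f_r` for `r ≥ 1` and `φ ∘ e_j ⋯ e_1 e_0` vanish on them, where `j` is the first position
occupied in `a + b`. The vanishing criterion then shows that `φ` is zero in the weight `a + b`. -/
lemma kk_mem_of_vacuum_mem {q pc : ℂ} (hq0 : q ≠ 0) (hq : ∀ k : ℕ, k ≠ 0 → q ^ k ≠ 1)
    (hpc : pc ≠ 0) {L : Type} [Field L] (ι : ℂ →+* L) {n : ℕ} (hn : 2 ≤ n)
    {ε : Fin n → Bool} {x y : L} (hxy : ∀ A B : ℂ, x * ι A + y * ι B = 0 → A = 0)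
    {U : Submodule L (WW L ε)} (hU : IsInvariant q pc ι ε x y U) (hvac : kk L ε 0 0 ∈ U) :
    ∀ (N : ℕ) (a b : Fin n → ℤ), ht (a + b) = N → kk L ε a b ∈ U := by
  intro N
  induction N using Nat.strong_induction_on with
  | _ N ih =>
    intro a₀ b₀ hN
    by_cases hR : Rg ε a₀ ∧ Rg ε b₀
    swap
    · rw [kk_eq_zero L hR]
      exact U.zero_mem
    obtain ⟨c, hc⟩ : ∃ c, c = a₀ + b₀ := ⟨_, rfl⟩
    by_cases hc0 : c = 0
    · have h0 : ∀ t, a₀ t = 0 ∧ b₀ t = 0 := by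
        intro t
        have h1 := hR.1.1 t
        have h2 := hR.2.1 t
        have h3 : a₀ t + b₀ t = 0 := congrFun (hc.symm.trans hc0) t
        omega
      have ha : a₀ = 0 := funext fun t => (h0 t).1
      have hb : b₀ = 0 := funext fun t => (h0 t).2
      rw [ha, hb]
      exact hvac
    by_contra hmem
    obtain ⟨φ, hφ, hφU⟩ := Submodule.exists_le_ker_of_notMem hmem
    have low : ∀ a b, ht (a + b) < ht c → kk L ε a b ∈ U := by
      intro a b h
      by_cases hR' : Rg ε a ∧ Rg ε b
      · have h1 : 0 ≤ ht (a + b) :=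
          ht_nonneg fun t => add_nonneg (hR'.1.1 t) (hR'.2.1 t)
        rw [hc] at h
        exact ih (ht (a + b)).toNat (by omega) a b (by omega)
      · rw [kk_eq_zero L hR']
        exact U.zero_mem
    obtain ⟨j, hj, hlt⟩ := exists_first hc0
    have hjn := j.2
    obtain ⟨G, hGj, hGs⟩ := exists_chain (j : ℕ)
      (fun r (ψ : WW L ε →ₗ[L] L) => ψ.comp (dEB q pc ι ε x y (Fin.ofNat (n + 1) r))) φ
    have hval : ∀ r ≤ n, ((Fin.ofNat (n + 1) r : Fin (n + 1)) : ℕ) = r := fun r hr => by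
      rw [Fin.val_ofNat, Nat.mod_eq_of_lt (by omega)]
    have hGU : ∀ k ≤ (j : ℕ), ∀ u ∈ U, G (j - k) u = 0 := by
      intro k
      induction k with
      | zero =>
        intro _ u hu
        rw [Nat.sub_zero, hGj]
        exact hφU hu
      | succ k ihk =>
        intro hk u hu
        have h := ihk (by omega) _ (hU (Fin.ofNat (n + 1) ((j : ℕ) - k)) u hu).1
        obtain ⟨r, hr⟩ : ∃ r, r = (j : ℕ) - (k + 1) := ⟨_, rfl⟩
        have hr1 : (j : ℕ) - k = r + 1 := by omega
        rw [hr1] at h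
        rw [← hr, hGs r (by omega)]
        exact h
    refine hφ ?_
    have hzero := core ι ε x y hxy c j hj hlt (fun r a b => G r (kk L ε a b))
      (fun r a b h => by rw [kk_eq_zero L h, map_zero]) ?_ ?_ ?_ a₀ b₀ hc.symm
    · simpa only [hGj] using hzero
    · intro r hr a b ha hb hb' hab
      have hm : kk L ε a b ∈ U := low a b (by rw [hab, ht_add, ht_sh_succ hr]; omega)
      have h : φ (dFB q pc ι ε x y (Fin.ofNat (n + 1) (r + 1)) (kk L ε a b)) = 0 :=
        hφU (hU _ _ hm).2.1
      rw [dFB_kk q pc ι hn ε x y _ ha hb, hval _ (by omega), if_neg (Nat.succ_ne_zero r),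
        if_neg (Nat.succ_ne_zero r), one_mul, one_mul, map_add, map_smul, map_smul, smul_eq_mul,
        smul_eq_mul, add_comm] at h
      simp only [hGj]
      exact ⟨_, _, mul_ne_zero (inv_ne_zero (ck_ne_zero hq0 hpc ε _ a))
        (cf_ne_zero hq0 hq (by omega) hb'), h⟩
    · intro r hr a b ha hb
      have h : G r (kk L ε a b) =
          G (r + 1) (dEB q pc ι ε x y (Fin.ofNat (n + 1) (r + 1)) (kk L ε a b)) := by
        rw [hGs r hr]
        rfl
      rw [dEB_kk q pc ι hn ε x y _ ha hb, hval _ (by omega), if_neg (Nat.succ_ne_zero r),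
        if_neg (Nat.succ_ne_zero r), one_mul, one_mul, map_add, map_smul, map_smul, smul_eq_mul,
        smul_eq_mul, add_comm] at h
      exact ⟨_, _, fun hR => mul_ne_zero (ce_ne_zero hq0 hq (by omega) hR)
        (ck_ne_zero hq0 hpc ε _ b), h⟩
    · intro hRa hRa'
      have hm : kk L ε (c - dlt j) 0 ∈ U :=
        low _ _ (by rw [add_zero, ht_sub, ht_dlt hjn.le]; omega)
      have h := hGU j le_rfl _ (hU (Fin.ofNat (n + 1) 0) _ hm).1
      rw [Nat.sub_self, dEB_kk q pc ι hn ε x y _ hRa Rg_zero, hval _ (by omega), if_pos rfl,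
        if_pos rfl, sh_zero, zero_add, map_add, map_smul, map_smul, smul_eq_mul, smul_eq_mul,
        add_comm] at h
      exact ⟨_, _, mul_ne_zero (ce_ne_zero hq0 hq (Nat.zero_le n) (by rw [sh_zero]; exact hRa'))
        (ck_ne_zero hq0 hpc ε _ 0), h⟩

lemma eq_top_of_kk_mem {L : Type} [Field L] {n : ℕ} {ε : Fin n → Bool}
    {U : Submodule L (WW L ε)} (h : ∀ a b, Rg ε a → Rg ε b → kk L ε a b ∈ U) : U = ⊤ := by
  rw [eq_top_iff]
  rintro v -
  induction v using Finsupp.induction_linear with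
  | zero => exact U.zero_mem
  | add f g hf hg => exact U.add_mem hf hg
  | single p s =>
    have h1 := U.smul_mem s (h _ _ (Rg_zz p.1) (Rg_zz p.2))
    rw [kk_zz, Finsupp.smul_single, smul_eq_mul, mul_one] at h1
    exact h1

/-! ### Irreducibility -/

/-- irreducibility of the type-B module `𝒲⊗𝒲`, over `ℂ(q^{1/2})(x,y)`. -/
theorem statement_18 (q qh : ℂ) (hq0 : q ≠ 0) (hqh : qh ^ 2 = q)
    (hq : ∀ k : ℕ, k ≠ 0 → q ^ k ≠ 1)
    (n κ : ℕ) [NeZero n] (hn : 2 ≤ n) (hκ1 : 1 ≤ κ) (hκ2 : κ ≤ n - 1)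
    (ε : Fin n → Bool) (hε : ε = fun t : Fin n => decide ((t : ℕ) < κ)) :
    ∀ U : Submodule (RatFunc (RatFunc ℂ)) (WW (RatFunc (RatFunc ℂ)) ε),
      (∀ r : Fin (n + 1), ∀ v ∈ U,
        dEB q (Complex.I * qh⁻¹) (RatFunc.C.comp RatFunc.C) ε
            (RatFunc.C RatFunc.X) RatFunc.X r v ∈ U ∧
        dFB q (Complex.I * qh⁻¹) (RatFunc.C.comp RatFunc.C) ε
            (RatFunc.C RatFunc.X) RatFunc.X r v ∈ U ∧
        dKB q (Complex.I * qh⁻¹) (RatFunc.C.comp RatFunc.C) ε 1 r v ∈ U ∧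
        dKB q (Complex.I * qh⁻¹) (RatFunc.C.comp RatFunc.C) ε (-1) r v ∈ U) →
      U = ⊥ ∨ U = ⊤ := by
  intro U hU
  have hqh0 : qh ≠ 0 := by
    rintro rfl
    exact hq0 (by rw [← hqh]; simp)
  have hpc : Complex.I * qh⁻¹ ≠ 0 := mul_ne_zero Complex.I_ne_zero (inv_ne_zero hqh0)
  have hx : (RatFunc.C RatFunc.X : RatFunc (RatFunc ℂ)) ≠ 0 := by
    rw [Ne, map_eq_zero]
    exact RatFunc.X_ne_zero
  have hy : (RatFunc.X : RatFunc (RatFunc ℂ)) ≠ 0 := RatFunc.X_ne_zero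
  have hInv : IsInvariant q (Complex.I * qh⁻¹) (RatFunc.C.comp RatFunc.C) ε
      (RatFunc.C RatFunc.X) RatFunc.X U :=
    fun r v hv => ⟨(hU r v hv).1, (hU r v hv).2.1, (hU r v hv).2.2.1⟩
  by_cases hbot : U = ⊥
  · exact Or.inl hbot
  right
  obtain ⟨v, hvU, hv0, c, hw⟩ := exists_weight_vector hq0 hq hpc _ hInv hbot
  have hc : 0 ≤ ht c := by
    by_contra h
    refine hv0 (eq_zero_of_ev fun a b => ?_)
    by_contra hab
    obtain ⟨ha, hb⟩ := rg_of_ev hab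
    rw [← hw a b hab] at h
    exact h (ht_nonneg fun t => add_nonneg (ha.1 t) (hb.1 t))
  have hvac : kk _ ε 0 0 ∈ U := by
    refine vacuum_mem_of_weight hq0 hq _ hn ?_ hInv (ht c).toNat v c hvU hv0 hw (by omega)
    intro A B h
    -- multiplying by `x y` exchanges the roles of the two constants
    refine (xy_indep B A ?_).2
    field_simp at h
    linear_combination h
  refine eq_top_of_kk_mem fun a b ha hb => ?_
  have hab : 0 ≤ ht (a + b) := ht_nonneg fun t => add_nonneg (ha.1 t) (hb.1 t)
  exact kk_mem_of_vacuum_mem hq0 hq hpc _ hn (fun A B h => (xy_indep A B h).1) hInv hvac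
    (ht (a + b)).toNat a b (by omega)

end TetraGQ
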